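/- arXiv:2201.13424 — 2 statements merged into one kernel-verified Lean document; each statement's English description precedes it below -/
import Mathlib

section
/- There exists an absolute constant C > 0 such that the following holds, where all boxes are taken with compression parameter C_compr := (log log N)^{50}. Let N ≥ t ≥ 10^1000 be real numbers with log N ≥ (log t)³, and let r be a positive integer with |r − (1/2)·log log N| < (log log N)^{2/3}. Let f₁, f₂, … be squarefree integers, all greater than t, satisfying f_{i+1} > f_i² for all i. For each i set W(f_i) := {x ∈ 𝒟_r(N) : there exist an integer 0 ≤ k ≤ r, an (N,k,r)-box X and x' ∈ X such that f_i divides x' and x ∈ X}. Then |⋃_{i≥1} W(f_i)| ≤ C·|𝒟_r(N)| / log t. -/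
/-- `𝒟`: squarefree positive integers all of whose prime divisors are `≡ 1, 2 (mod 4)`. -/
def PellD : Set ℕ :=
  {d | Squarefree d ∧ 0 < d ∧ ∀ p : ℕ, p.Prime → p ∣ d → p % 4 = 1 ∨ p % 4 = 2}

/-- `𝒟_r(N)`. -/
def PellDr (r : ℕ) (N : ℝ) : Set ℕ :=
  {d ∈ PellD | (d : ℝ) < N ∧ d.primeFactors.card = r}

/-- `D₁ = exp((log log N)^{1/10})`. -/
noncomputable def D₁ (N : ℝ) : ℝ := Real.exp ((Real.log (Real.log N)) ^ ((1 : ℝ) / 10))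

/-- `B ⊆ ℕ` is an `(N,k,r)`-box with compression parameter `Ccompr`. -/
def IsBox (N Ccompr : ℝ) (k r : ℕ) (B : Set ℕ) : Prop :=
  k ≤ r ∧
  ∃ (X : ℕ → Finset ℕ) (p : ℕ → ℕ) (s : ℕ → ℝ),
    (∀ i, 1 ≤ i → i ≤ k →
      (p i).Prime ∧ (p i % 4 = 1 ∨ p i % 4 = 2) ∧ ((p i : ℝ) < D₁ N)) ∧
    (∀ i j, 1 ≤ i → i < j → j ≤ k → p i < p j) ∧
    (∀ i, k < i → i ≤ r → D₁ N ≤ s i) ∧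
    (∀ i, k < i → i + 1 ≤ r → s i < s (i + 1) ∧ s i < (2 / 3) * s (i + 1)) ∧
    (∀ i, 1 ≤ i → i ≤ k → X i = {p i}) ∧
    (∀ i, k < i → i ≤ r → ∀ q : ℕ,
      (q ∈ X i ↔ q.Prime ∧ (q % 4 = 1 ∨ q % 4 = 2) ∧
        s i < (q : ℝ) ∧ (q : ℝ) ≤ s i * (1 + 1 / Ccompr))) ∧
    (∀ i, 1 ≤ i → i ≤ r → (X i).Nonempty) ∧
    B = {d : ℕ | ∃ x : ℕ → ℕ, (∀ i, 1 ≤ i → i ≤ r → x i ∈ X i) ∧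
      d = ∏ i ∈ Finset.Icc 1 r, x i} ∧
    B ⊆ {d : ℕ | d ∈ PellD ∧ (d : ℝ) < N}

/-!
Let `L = log log N`, let `F` be squarefree with largest prime factor `q`, and write `W(F)` for the
set of the theorem. An element of `W(F)` shares its box with a multiple of `F`, so it has a prime
factor in a short window around `q`, equal to `q` when `q < D₁ N`. Hence the multiples of few
primes, or of few products of two primes, cover `W(F)`. Since `𝒟_r(N)` has
`O(|𝒟_r(N)| / d)` multiples of such a prime or product `d`, this gives
`|W(F)| ≪ |𝒟_r(N)| (1 / log F + exp (-L / 3) / L)`.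

The bound for multiples of `d` compares an upper bound obtained by Chebyshev's device of weighting
each element by its logarithm with a lower bound for `|𝒟_r(N)|` obtained by summing over the
largest prime factor; both are governed by elementary symmetric sums of `1 / p` over the primes
`p ≡ 1 (mod 4)`, which Mertens' theorem for this progression controls.

From `f (i + 1) > f i ^ 2` one gets `log (f i) ≥ 2 ^ (i - 1) log t`. So the terms `1 / log (f i)`
sum geometrically, while only `O(L)` of the `f i` are less than `N`, which bounds the contribution
of the second term by `O(exp (-L / 3))`, and `log t ≤ exp (L / 3)`.
-/

namespace AvoidSiegel

open Filter Finset Real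
open scoped ArithmeticFunction.vonMangoldt

/-! ### Sums twisted by a character -/

section AbelSummation

variable {f g : ℕ → ℝ} {B : ℝ}

lemma abs_sum_Ico_mul_le_of_antitoneOn (hf : ∀ n, |∑ m ∈ range n, f m| ≤ B) {a : ℕ}
    (hg : AntitoneOn g (Set.Ici a)) (hg0 : ∀ m, a ≤ m → 0 ≤ g m) (b : ℕ) :
    |∑ m ∈ Ico a b, f m * g m| ≤ 2 * B * g a := by
  have hB : 0 ≤ B := (abs_nonneg _).trans (hf 0)
  rcases lt_or_ge b a with hab | hab
  · rw [Ico_eq_empty_of_le hab.le, sum_empty, abs_zero]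
    have := hg0 a le_rfl
    positivity
  set F : ℕ → ℝ := fun n ↦ ∑ m ∈ range n, f m
  have abel : |∑ m ∈ Ico a b, f m * g m - F b * g b + F a * g a| ≤ B * (g a - g b) := by
    induction b, hab using Nat.le_induction with
    | base => simp
    | succ b hab ih =>
      have hstep : 0 ≤ g b - g (b + 1) :=
        sub_nonneg.2 (hg (Set.mem_Ici.2 hab) (Set.mem_Ici.2 (by lia)) b.le_succ)
      have hF : F (b + 1) = F b + f b := sum_range_succ f b
      calc |∑ m ∈ Ico a (b + 1), f m * g m - F (b + 1) * g (b + 1) + F a * g a|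
          = |(∑ m ∈ Ico a b, f m * g m - F b * g b + F a * g a)
              + F (b + 1) * (g b - g (b + 1))| := by
            rw [sum_Ico_succ_top hab, hF]; ring_nf
        _ ≤ B * (g a - g b) + B * (g b - g (b + 1)) := by
            refine (abs_add_le _ _).trans (add_le_add ih ?_)
            rw [abs_mul, abs_of_nonneg hstep]
            exact mul_le_mul_of_nonneg_right (hf _) hstep
        _ = B * (g a - g (b + 1)) := by ring
  have hFb : |F b * g b| ≤ B * g b := by
    rw [abs_mul, abs_of_nonneg (hg0 b hab)]
    exact mul_le_mul_of_nonneg_right (hf b) (hg0 b hab)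
  have hFa : |F a * g a| ≤ B * g a := by
    rw [abs_mul, abs_of_nonneg (hg0 a le_rfl)]
    exact mul_le_mul_of_nonneg_right (hf a) (hg0 a le_rfl)
  rw [abs_le] at *
  constructor <;> linarith

lemma exists_abs_sum_div_sub_le (hf : ∀ n, |∑ m ∈ range n, f m| ≤ B) :
    ∃ l : ℝ, ∀ k : ℕ, |∑ m ∈ Ioc 0 k, f m / m - l| ≤ 2 * B / (k + 1) := by
  set F : ℕ → ℝ := fun k ↦ ∑ m ∈ Ioc 0 k, f m / m
  have hF : ∀ j k, j ≤ k → |F k - F j| ≤ 2 * B / (j + 1) := by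
    intro j k hjk
    have hanti : AntitoneOn (fun m : ℕ ↦ (m : ℝ)⁻¹) (Set.Ici (j + 1)) := by
      intro m hm m' _ hmm'
      have : (0 : ℝ) < m := by exact_mod_cast (Nat.succ_pos j).trans_le hm
      simp only
      gcongr
    have htail : F k - F j = ∑ m ∈ Ico (j + 1) (k + 1), f m * (m : ℝ)⁻¹ := by
      rw [sub_eq_iff_eq_add', show Ico (j + 1) (k + 1) = Ioc j k by ext; simp]
      exact (sum_Ioc_consecutive _ (Nat.zero_le j) hjk).symm
    rw [htail]
    refine (abs_sum_Ico_mul_le_of_antitoneOn hf hanti (fun m _ ↦ by positivity) _).trans_eq ?_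
    push_cast
    ring
  have hcauchy : CauchySeq F := by
    refine Metric.cauchySeq_iff'.2 fun ε hε ↦ ?_
    obtain ⟨n, hn⟩ := exists_nat_gt (2 * B / ε)
    refine ⟨n, fun m hm ↦ (hF n m hm).trans_lt ?_⟩
    rw [div_lt_iff₀ hε] at hn
    rw [div_lt_iff₀ (by positivity)]
    linarith
  obtain ⟨l, hl⟩ := cauchySeq_tendsto_of_complete hcauchy
  refine ⟨l, fun k ↦ ?_⟩
  rw [abs_sub_comm]
  exact le_of_tendsto (hl.sub_const (F k)).abs
    ((eventually_ge_atTop k).mono fun j hj ↦ hF k j hj)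

lemma exists_abs_sum_mul_log_div_le (hf : ∀ n, |∑ m ∈ range n, f m| ≤ B) :
    ∃ C : ℝ, ∀ n : ℕ, |∑ m ∈ Ioc 0 n, f m * (log m / m)| ≤ C := by
  have hanti : AntitoneOn (fun m : ℕ ↦ log m / m) (Set.Ici 3) := by
    have he : ∀ m : ℕ, m ∈ Set.Ici 3 → exp 1 ≤ m := fun m hm ↦ by
      have : (3 : ℝ) ≤ m := by exact_mod_cast hm
      linarith [exp_one_lt_d9]
    exact fun m hm m' hm' hmm' ↦ log_div_self_antitoneOn (he m hm) (he m' hm')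
      (by exact_mod_cast hmm')
  have hnonneg : ∀ m : ℕ, 0 ≤ log m / m := fun m ↦ by positivity
  refine ⟨∑ m ∈ Ioc 0 2, |f m * (log m / m)| + 2 * B * (log (3 : ℕ) / (3 : ℕ)), fun n ↦ ?_⟩
  have hsplit : ∑ m ∈ Ioc 0 n, f m * (log m / m) =
      ∑ m ∈ Ioc 0 (min n 2), f m * (log m / m) + ∑ m ∈ Ico 3 (n + 1), f m * (log m / m) := by
    rw [← sum_union (disjoint_left.2 fun m ↦ by simp only [mem_Ioc, mem_Ico]; lia)]
    exact sum_congr (by ext; simp only [mem_Ioc, mem_union, mem_Ico]; lia) fun _ _ ↦ rfl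
  rw [hsplit]
  refine (abs_add_le _ _).trans (add_le_add ?_ ?_)
  · exact (abs_sum_le_sum_abs _ _).trans (sum_le_sum_of_subset_of_nonneg
      (Ioc_subset_Ioc_right (min_le_right n 2)) fun _ _ _ ↦ abs_nonneg _)
  · exact abs_sum_Ico_mul_le_of_antitoneOn hf hanti (fun m _ ↦ hnonneg m) _

end AbelSummation

section CompletelyMultiplicative

variable (χ : ℕ →* ℝ)

lemma sum_mul_vonMangoldt_div_mul_sum_eq (n : ℕ) :
    ∑ d ∈ Ioc 0 n, χ d * Λ d / d * ∑ e ∈ Ioc 0 (n / d), χ e / e =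
      ∑ m ∈ Ioc 0 n, χ m * (log m / m) := by
  let f : ArithmeticFunction ℝ := ⟨fun n ↦ χ n * Λ n / n, by simp⟩
  let g : ArithmeticFunction ℝ := ⟨fun n ↦ χ n / n, by simp⟩
  have hconv : ∀ m : ℕ, (f * g) m = χ m * (log m / m) := by
    intro m
    rcases Nat.eq_zero_or_pos m with rfl | hm
    · simp
    rw [ArithmeticFunction.mul_apply, ← ArithmeticFunction.vonMangoldt_sum,
      Nat.sum_divisorsAntidiagonal (f := fun x y ↦ f x * g y), sum_div, mul_sum]
    refine sum_congr rfl fun d hd ↦ ?_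
    obtain ⟨e, rfl⟩ := Nat.dvd_of_mem_divisors hd
    have hd0 : 0 < d := Nat.pos_of_mul_pos_right hm
    have he0 : 0 < e := Nat.pos_of_mul_pos_left hm
    simp only [f, g, ArithmeticFunction.coe_mk, Nat.mul_div_cancel_left _ hd0, map_mul]
    push_cast
    field_simp
  simp only [← hconv]
  exact (ArithmeticFunction.sum_Ioc_mul_eq_sum_sum f g n).symm

variable {χ} {B : ℝ}

lemma abs_le_one_of_abs_sum_le (hχ : ∀ n, |∑ m ∈ range n, χ m| ≤ B) (n : ℕ) : |χ n| ≤ 1 := by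
  by_contra! hlt
  obtain ⟨k, hk⟩ := pow_unbounded_of_one_lt (2 * B) hlt
  have hterm : χ (n ^ k) = ∑ m ∈ range (n ^ k + 1), χ m - ∑ m ∈ range (n ^ k), χ m := by
    rw [sum_range_succ]; ring
  have : |χ (n ^ k)| ≤ B + B := by
    rw [hterm]
    exact (abs_sub _ _).trans (add_le_add (hχ _) (hχ _))
  rw [map_pow, abs_pow] at this
  linarith

lemma natCast_div_le_div_add_one (n d : ℕ) : (n : ℝ) / d ≤ (n / d : ℕ) + 1 := by
  rw [← Nat.floor_div_eq_div (K := ℝ)]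
  exact (Nat.lt_floor_add_one _).le

lemma sum_vonMangoldt_le (n : ℕ) : ∑ d ∈ Ioc 0 n, Λ d ≤ (log 4 + 4) * n := by
  simpa [Chebyshev.psi] using Chebyshev.psi_le_const_mul_self (Nat.cast_nonneg n)

lemma abs_mul_vonMangoldt_div_mul_sub_le (hχ : ∀ n, |∑ m ∈ range n, χ m| ≤ B) {l : ℝ}
    (hL : ∀ k : ℕ, |∑ m ∈ Ioc 0 k, χ m / m - l| ≤ 2 * B / (k + 1)) {d n : ℕ} (hd : d ∈ Ioc 0 n) :
    |χ d * Λ d / d * (l - ∑ e ∈ Ioc 0 (n / d), χ e / e)| ≤ 2 * B / n * Λ d := by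
  have hB : 0 ≤ B := (abs_nonneg _).trans (hχ 0)
  obtain ⟨hd0, hdn⟩ := mem_Ioc.1 hd
  have hd0' : (0 : ℝ) < d := by exact_mod_cast hd0
  have hn0 : (0 : ℝ) < n := by exact_mod_cast hd0.trans_le hdn
  have hcoef : |χ d * Λ d / d| ≤ Λ d / d := by
    rw [abs_div, abs_mul, abs_of_pos hd0', abs_of_nonneg ArithmeticFunction.vonMangoldt_nonneg]
    gcongr
    exact mul_le_of_le_one_left ArithmeticFunction.vonMangoldt_nonneg
      (abs_le_one_of_abs_sum_le hχ d)
  have htail : |l - ∑ e ∈ Ioc 0 (n / d), χ e / e| ≤ 2 * B / (n / d) := by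
    rw [abs_sub_comm]
    refine (hL _).trans ?_
    gcongr
    exact natCast_div_le_div_add_one n d
  calc |χ d * Λ d / d * (l - ∑ e ∈ Ioc 0 (n / d), χ e / e)|
      ≤ Λ d / d * (2 * B / (n / d)) := by rw [abs_mul]; gcongr
    _ = 2 * B / n * Λ d := by field_simp

-- `∑ χ(m) log m / m` is the convolution of `χΛ/id` with `χ/id`; the inner sums of the latter may
-- be replaced by `L(1, χ) ≠ 0` at the cost of `O(ψ(n)/n) = O(1)`.
lemma exists_abs_sum_mul_vonMangoldt_div_le (hχ : ∀ n, |∑ m ∈ range n, χ m| ≤ B) {l : ℝ}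
    (hl : l ≠ 0) (hL : ∀ k : ℕ, |∑ m ∈ Ioc 0 k, χ m / m - l| ≤ 2 * B / (k + 1)) :
    ∃ C : ℝ, ∀ n : ℕ, |∑ d ∈ Ioc 0 n, χ d * Λ d / d| ≤ C := by
  obtain ⟨c, hc⟩ := exists_abs_sum_mul_log_div_le hχ
  have hB : 0 ≤ B := (abs_nonneg _).trans (hχ 0)
  refine ⟨(c + 2 * B * (log 4 + 4)) / |l|, fun n ↦ ?_⟩
  rw [le_div_iff₀ (abs_pos.2 hl), mul_comm, ← abs_mul]
  have hsum : |∑ d ∈ Ioc 0 n, χ d * Λ d / d * (l - ∑ e ∈ Ioc 0 (n / d), χ e / e)| ≤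
      2 * B * (log 4 + 4) := by
    refine (abs_sum_le_sum_abs _ _).trans ((sum_le_sum fun d hd ↦
      abs_mul_vonMangoldt_div_mul_sub_le hχ hL hd).trans ?_)
    rw [← mul_sum]
    calc 2 * B / n * ∑ d ∈ Ioc 0 n, Λ d ≤ 2 * B / n * ((log 4 + 4) * n) := by
          gcongr
          exact sum_vonMangoldt_le n
      _ = 2 * B * (log 4 + 4) * (n / n) := by ring
      _ ≤ 2 * B * (log 4 + 4) * 1 := by gcongr; exact div_self_le_one _
      _ = 2 * B * (log 4 + 4) := mul_one _
  have hdecomp : l * ∑ d ∈ Ioc 0 n, χ d * Λ d / d =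
      ∑ m ∈ Ioc 0 n, χ m * (log m / m) +
        ∑ d ∈ Ioc 0 n, χ d * Λ d / d * (l - ∑ e ∈ Ioc 0 (n / d), χ e / e) := by
    rw [← sum_mul_vonMangoldt_div_mul_sum_eq, ← sum_add_distrib, mul_sum]
    exact sum_congr rfl fun _ _ ↦ by ring
  rw [hdecomp]
  exact (abs_add_le _ _).trans (add_le_add (hc n) hsum)

end CompletelyMultiplicative

/-! ### Mertens' theorem for primes congruent to `1` modulo `4` -/

/-- The nontrivial Dirichlet character modulo `4`, as a real-valued function on `ℕ`. -/
noncomputable def chi4 : ℕ →* ℝ :=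
  ((Int.castRingHom ℝ : ℤ →* ℝ).comp (ZMod.χ₄ : ZMod 4 →* ℤ)).comp
    (Nat.castRingHom (ZMod 4) : ℕ →* ZMod 4)

lemma chi4_apply (n : ℕ) : chi4 n = if n % 2 = 0 then 0 else if n % 4 = 1 then 1 else -1 := by
  change ((ZMod.χ₄ (n : ZMod 4) : ℤ) : ℝ) = _
  rw [ZMod.χ₄_nat_eq_if_mod_four]
  split_ifs <;> simp

lemma sum_range_chi4 (n : ℕ) :
    ∑ m ∈ range n, chi4 m = if n % 4 = 2 ∨ n % 4 = 3 then 1 else 0 := by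
  induction n with
  | zero => simp
  | succ n ih =>
    rw [sum_range_succ, ih, chi4_apply]
    split_ifs <;> first | lia | norm_num

lemma abs_sum_range_chi4_le (n : ℕ) : |∑ m ∈ range n, chi4 m| ≤ 1 := by
  rw [sum_range_chi4]
  split_ifs <;> simp

lemma exists_abs_sum_chi4_mul_vonMangoldt_div_le :
    ∃ C : ℝ, ∀ n : ℕ, |∑ d ∈ Ioc 0 n, chi4 d * Λ d / d| ≤ C := by
  obtain ⟨l, hl⟩ := exists_abs_sum_div_sub_le abs_sum_range_chi4_le
  refine exists_abs_sum_mul_vonMangoldt_div_le abs_sum_range_chi4_le ?_ hl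
  rintro rfl
  have : ∑ m ∈ Ioc 0 2, chi4 m / m = 1 := by
    rw [show Ioc 0 2 = {1, 2} by decide, sum_pair (by decide), chi4_apply, chi4_apply]
    norm_num
  have hl2 := hl 2
  rw [this] at hl2
  norm_num at hl2

lemma sum_vonMangoldt_mul_floor_eq_log_factorial (n : ℕ) :
    ∑ d ∈ Ioc 0 n, Λ d * (n / d : ℕ) = log n.factorial := by
  have hfac : n.factorial = ∏ i ∈ Ioc 0 n, i := (prod_Ico_id_eq_factorial n).symm
  rw [← ArithmeticFunction.sum_Ioc_mul_zeta_eq_sum, ArithmeticFunction.vonMangoldt_mul_zeta, hfac,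
    Nat.cast_prod, log_prod fun i hi ↦ by exact_mod_cast (mem_Ioc.1 hi).1.ne']
  rfl

lemma abs_sum_vonMangoldt_div_sub_log_le {n : ℕ} (hn : n ≠ 0) :
    |∑ d ∈ Ioc 0 n, Λ d / d - log n| ≤ log 4 + 4 := by
  have hn0 : (0 : ℝ) < n := by positivity
  have hlow : log n.factorial ≤ n * ∑ d ∈ Ioc 0 n, Λ d / d := by
    rw [← sum_vonMangoldt_mul_floor_eq_log_factorial, mul_sum]
    refine sum_le_sum fun d _ ↦ ?_
    calc Λ d * (n / d : ℕ) ≤ Λ d * (n / d) := by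
          gcongr
          exact Nat.cast_div_le
      _ = n * (Λ d / d) := by ring
  have hupp : n * ∑ d ∈ Ioc 0 n, Λ d / d ≤ log n.factorial + (log 4 + 4) * n := by
    rw [← sum_vonMangoldt_mul_floor_eq_log_factorial]
    refine le_trans ?_ (add_le_add_right (sum_vonMangoldt_le n) _)
    rw [mul_sum, ← sum_add_distrib]
    refine sum_le_sum fun d _ ↦ ?_
    calc n * (Λ d / d) = Λ d * (n / d) := by ring
      _ ≤ Λ d * ((n / d : ℕ) + 1) := by
          gcongr
          exact natCast_div_le_div_add_one n d
      _ = Λ d * (n / d : ℕ) + Λ d := by ring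
  have hfac_le : log n.factorial ≤ n * log n := by
    rw [← log_pow]
    exact log_le_log (by positivity) (by exact_mod_cast n.factorial_le_pow)
  have hfac_ge : n * log n - n ≤ log n.factorial := by
    have hlog : 0 ≤ log n := log_natCast_nonneg n
    have hpi : 0 ≤ log (2 * π) := log_nonneg (by linarith [pi_gt_three])
    linarith [Stirling.le_log_factorial_stirling hn]
  have h4 : 0 ≤ log 4 := log_nonneg (by norm_num)
  rw [abs_le]
  constructor <;> nlinarith

lemma exists_sum_not_prime_vonMangoldt_div_le :
    ∃ C : ℝ, ∀ n : ℕ, ∑ d ∈ Ioc 0 n, (if d.Prime then 0 else Λ d / d) ≤ C := by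
  have hsum : Summable fun d : ℕ ↦ if d.Prime then 0 else Λ d / d := by
    refine (ArithmeticFunction.vonMangoldt.summable_residueClass_non_primes_div
      (q := 1) 0).congr fun d ↦ ?_
    split_ifs
    · simp
    · simp [ArithmeticFunction.vonMangoldt.residueClass, Subsingleton.elim _ (0 : ZMod 1)]
  refine ⟨_, fun n ↦ hsum.sum_le_tsum _ fun d _ ↦ ?_⟩
  split_ifs
  · exact le_rfl
  · exact div_nonneg ArithmeticFunction.vonMangoldt_nonneg d.cast_nonneg

/-- The primes congruent to `1` modulo `4`, i.e. those that split in `ℤ[i]`, up to `x`. -/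
noncomputable def splitPrimes (x : ℝ) : Finset ℕ := {p ∈ Nat.primesLE ⌊x⌋₊ | p % 4 = 1}

-- Up to the prime `2`, the indicator of `p ≡ 1 [MOD 4]` on primes is `(1 + χ₄) / 2`.
lemma split_prime_indicator_bounds (d : ℕ) :
    (if d.Prime ∧ d % 4 = 1 then log d / d else 0) ≤ (1 + chi4 d) / 2 * (Λ d / d) ∧
      (1 + chi4 d) / 2 * (Λ d / d) ≤ (if d.Prime ∧ d % 4 = 1 then log d / d else 0)
        + (if d.Prime then 0 else Λ d / d) + (if d = 2 then 1 else 0) := by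
  have hΛ : 0 ≤ Λ d / d := div_nonneg ArithmeticFunction.vonMangoldt_nonneg d.cast_nonneg
  by_cases hp : d.Prime
  · have hΛp := ArithmeticFunction.vonMangoldt_apply_prime hp
    rcases hp.eq_two_or_odd with rfl | hodd
    · have := log_two_lt_d9
      have := log_two_gt_d9
      norm_num [hΛp, chi4_apply, Nat.prime_two]
      constructor <;> linarith
    · have hd2 : d ≠ 2 := by rintro rfl; lia
      by_cases h1 : d % 4 = 1 <;> simp [hp, h1, chi4_apply, hodd, hΛp, hd2]
  · have hd2 : d ≠ 2 := by rintro rfl; exact hp Nat.prime_two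
    have hχ : 0 ≤ (1 + chi4 d) / 2 ∧ (1 + chi4 d) / 2 ≤ 1 := by
      rw [chi4_apply]; split_ifs <;> norm_num
    simp only [hp, false_and, if_false, hd2, zero_add, add_zero]
    exact ⟨mul_nonneg hχ.1 hΛ, mul_le_of_le_one_left hΛ hχ.2⟩

theorem exists_abs_sum_splitPrimes_log_div_sub_le : ∃ C : ℝ, ∀ n : ℕ, n ≠ 0 →
    |∑ p ∈ splitPrimes n, log p / p - log n / 2| ≤ C := by
  obtain ⟨c₁, hχ⟩ := exists_abs_sum_chi4_mul_vonMangoldt_div_le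
  obtain ⟨c₂, hnp⟩ := exists_sum_not_prime_vonMangoldt_div_le
  refine ⟨c₁ / 2 + c₂ + 1 + (log 4 + 4) / 2, fun n hn ↦ ?_⟩
  have hsplit : ∑ p ∈ splitPrimes n, log p / p =
      ∑ d ∈ Ioc 0 n, if d.Prime ∧ d % 4 = 1 then log d / d else 0 := by
    rw [splitPrimes, Nat.floor_natCast, Nat.primesLE_eq_filter_Ioc_zero, filter_filter, sum_filter]
  have htwisted : ∑ d ∈ Ioc 0 n, (1 + chi4 d) / 2 * (Λ d / d) =
      (∑ d ∈ Ioc 0 n, Λ d / d) / 2 + (∑ d ∈ Ioc 0 n, chi4 d * Λ d / d) / 2 := by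
    rw [sum_div, sum_div, ← sum_add_distrib]
    exact sum_congr rfl fun _ _ ↦ by ring
  have hlow := sum_le_sum fun d (_ : d ∈ Ioc 0 n) ↦ (split_prime_indicator_bounds d).1
  have hupp := sum_le_sum fun d (_ : d ∈ Ioc 0 n) ↦ (split_prime_indicator_bounds d).2
  rw [sum_add_distrib, sum_add_distrib] at hupp
  have htwo : ∑ d ∈ Ioc 0 n, (if d = 2 then (1 : ℝ) else 0) ≤ 1 := by
    rw [sum_ite_eq']; split_ifs <;> norm_num
  have hc₂ : 0 ≤ c₂ := by simpa using hnp 0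
  rw [hsplit]
  rw [htwisted] at hlow hupp
  have hΛ := abs_le.1 (abs_sum_vonMangoldt_div_sub_log_le hn)
  have hχn := abs_le.1 (hχ n)
  have hnpn := hnp n
  rw [abs_le]
  constructor <;> linarith [hΛ.1, hΛ.2, hχn.1, hχn.2]

lemma sum_primesLE_log_div_le {n : ℕ} (hn : n ≠ 0) :
    ∑ p ∈ Nat.primesLE n, log p / p ≤ log n + (log 4 + 4) := by
  have hle : ∑ p ∈ Nat.primesLE n, log p / p ≤ ∑ d ∈ Ioc 0 n, Λ d / d := by
    rw [Nat.primesLE_eq_filter_Ioc_zero, sum_filter]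
    refine sum_le_sum fun d _ ↦ ?_
    split_ifs with hp
    · rw [ArithmeticFunction.vonMangoldt_apply_prime hp]
    · exact div_nonneg ArithmeticFunction.vonMangoldt_nonneg d.cast_nonneg
  linarith [(abs_le.1 (abs_sum_vonMangoldt_div_sub_log_le hn)).2]

lemma mem_splitPrimes {x : ℝ} (hx : 0 ≤ x) {p : ℕ} :
    p ∈ splitPrimes x ↔ p.Prime ∧ p % 4 = 1 ∧ (p : ℝ) ≤ x := by
  rw [splitPrimes, mem_filter, Nat.mem_primesLE, Nat.le_floor_iff hx]
  tauto

lemma mem_primesLE_floor {x : ℝ} (hx : 0 ≤ x) {p : ℕ} :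
    p ∈ Nat.primesLE ⌊x⌋₊ ↔ p.Prime ∧ (p : ℝ) ≤ x := by
  rw [Nat.mem_primesLE, Nat.le_floor_iff hx, and_comm]

lemma splitPrimes_subset_primesLE (x : ℝ) : splitPrimes x ⊆ Nat.primesLE ⌊x⌋₊ :=
  filter_subset _ _

lemma splitPrimes_mono : Monotone splitPrimes := fun _ _ h ↦
  filter_subset_filter _ (Nat.primesLE_mono (Nat.floor_le_floor h))

lemma lt_of_mem_splitPrimes_sdiff {x y : ℝ} {p : ℕ} (hx : 0 ≤ x)
    (hp : p ∈ splitPrimes y \ splitPrimes x) : x < p := by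
  obtain ⟨hpy, hpx⟩ := mem_sdiff.1 hp
  have hpy := mem_filter.1 hpy
  by_contra! hle
  exact hpx ((mem_splitPrimes hx).2 ⟨Nat.prime_of_mem_primesLE hpy.1, hpy.2, hle⟩)

lemma log_floor_le {x : ℝ} (hx : 1 ≤ x) : log ⌊x⌋₊ ≤ log x :=
  log_le_log (by exact_mod_cast Nat.floor_pos.2 hx) (Nat.floor_le (by linarith))

lemma log_le_log_floor_add_one {x : ℝ} (hx : 1 ≤ x) : log x ≤ log ⌊x⌋₊ + 1 := by
  have hfloor : (1 : ℝ) ≤ ⌊x⌋₊ := by exact_mod_cast Nat.floor_pos.2 hx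
  have hlog : log x ≤ log (2 * ⌊x⌋₊) :=
    log_le_log (by linarith) (by linarith [Nat.lt_floor_add_one x])
  rw [log_mul (by norm_num) (by linarith)] at hlog
  linarith [log_two_lt_d9]

lemma exists_abs_sum_splitPrimes_log_div_sub_le_real : ∃ C : ℝ, ∀ x : ℝ, 1 ≤ x →
    |∑ p ∈ splitPrimes x, log p / p - log x / 2| ≤ C := by
  obtain ⟨C, hC⟩ := exists_abs_sum_splitPrimes_log_div_sub_le
  refine ⟨C + 1 / 2, fun x hx ↦ ?_⟩
  have hfloor := hC ⌊x⌋₊ (Nat.floor_pos.2 hx).ne'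
  rw [splitPrimes, Nat.floor_natCast] at hfloor
  have := log_floor_le hx
  have := log_le_log_floor_add_one hx
  rw [splitPrimes]
  rw [abs_le] at *
  constructor <;> linarith [hfloor.1, hfloor.2]

lemma exists_mul_log_le_sum_splitPrimes_sdiff {δ : ℝ} (hδ : δ < 1 / 2) :
    ∃ K : ℝ, exp 1 ≤ K ∧ ∀ x : ℝ, 1 ≤ x →
      δ * log K ≤ ∑ p ∈ splitPrimes (K * x) \ splitPrimes x, log p / p := by
  obtain ⟨C, hC⟩ := exists_abs_sum_splitPrimes_log_div_sub_le_real
  have hC0 : 0 ≤ C := (abs_nonneg _).trans (hC 1 le_rfl)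
  have hδ0 : 0 < 1 / 2 - δ := by linarith
  set k := 2 * C / (1 / 2 - δ) + 1 with hk
  have hk1 : 1 ≤ k := le_add_of_nonneg_left (by positivity)
  refine ⟨exp k, exp_le_exp.2 hk1, fun x hx ↦ ?_⟩
  have hexp : 1 ≤ exp k := one_le_exp (by linarith)
  have hlow := (abs_le.1 (hC (exp k * x) (one_le_mul_of_one_le_of_one_le hexp hx))).1
  have hupp := (abs_le.1 (hC x hx)).2
  rw [log_mul (by positivity) (by positivity), log_exp] at hlow
  have hsum := sum_sdiff (f := fun p : ℕ ↦ log p / p)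
    (splitPrimes_mono (le_mul_of_one_le_left (by linarith : 0 ≤ x) hexp))
  have hkC : (1 / 2 - δ) * k = 2 * C + (1 / 2 - δ) := by
    rw [hk, mul_add, mul_one, mul_div_cancel₀ _ hδ0.ne']
  rw [log_exp]
  linarith

lemma exists_mul_le_sum_splitPrimes_log :
    ∃ c K : ℝ, 0 < c ∧ ∀ x : ℝ, K ≤ x → c * x ≤ ∑ p ∈ splitPrimes x, log p := by
  obtain ⟨K, hK, hblock⟩ := exists_mul_log_le_sum_splitPrimes_sdiff (δ := 1 / 4) (by norm_num)
  have hK1 : 1 < K := by linarith [exp_one_gt_d9]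
  refine ⟨1 / 4 * log K / K, K, by have := log_pos hK1; positivity, fun x hx ↦ ?_⟩
  have hxK : 0 < x / K := div_pos (by linarith) (by linarith)
  have hlow := hblock (x / K) (by rwa [one_le_div (by linarith)])
  rw [mul_div_cancel₀ _ (by linarith : K ≠ 0)] at hlow
  have hupp : ∑ p ∈ splitPrimes x \ splitPrimes (x / K), log p / p ≤
      ∑ p ∈ splitPrimes x, log p / (x / K) := by
    refine (sum_le_sum fun p hp ↦ ?_).trans
      (sum_le_sum_of_subset_of_nonneg sdiff_subset fun p _ _ ↦ by positivity)
    have := lt_of_mem_splitPrimes_sdiff hxK.le hp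
    gcongr
  rw [← sum_div] at hupp
  have := (le_div_iff₀ hxK).1 (hlow.trans hupp)
  linarith [show 1 / 4 * log K / K * x = 1 / 4 * log K * (x / K) by ring]

lemma exists_mul_harmonic_le_sum_splitPrimes_pow {δ : ℝ} (hδ : δ < 1 / 2) :
    ∃ K : ℝ, exp 1 ≤ K ∧ ∀ J : ℕ,
      δ * (harmonic J : ℝ) ≤ ∑ p ∈ splitPrimes (K ^ J), 1 / (p : ℝ) := by
  obtain ⟨K, hK, hblock⟩ := exists_mul_log_le_sum_splitPrimes_sdiff hδ
  have hK1 : 1 < K := by linarith [exp_one_gt_d9]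
  have hlogK : 1 ≤ log K := by rwa [le_log_iff_exp_le (by linarith)]
  have hshell (J : ℕ) :
      δ * ((J : ℝ) + 1)⁻¹ ≤ ∑ p ∈ splitPrimes (K ^ (J + 1)) \ splitPrimes (K ^ J), 1 / (p : ℝ) := by
    have hlow := hblock (K ^ J) (one_le_pow₀ hK1.le)
    rw [← pow_succ'] at hlow
    have hupp : ∑ p ∈ splitPrimes (K ^ (J + 1)) \ splitPrimes (K ^ J), log p / p ≤
        ∑ p ∈ splitPrimes (K ^ (J + 1)) \ splitPrimes (K ^ J),
          (J + 1) * log K * (1 / (p : ℝ)) := by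
      refine sum_le_sum fun p hp ↦ ?_
      obtain ⟨hp, -, hpK⟩ := (mem_splitPrimes (by positivity)).1 (mem_sdiff.1 hp).1
      have hlog := log_le_log (by exact_mod_cast hp.pos) hpK
      rw [log_pow] at hlog
      push_cast at hlog
      rw [div_eq_mul_one_div]
      gcongr
    rw [← mul_sum] at hupp
    rw [← div_eq_mul_inv, div_le_iff₀ (by positivity)]
    refine le_of_mul_le_mul_right ?_ (by linarith : 0 < log K)
    linarith
  refine ⟨K, hK, fun J ↦ ?_⟩
  induction J with
  | zero => simpa using sum_nonneg fun (p : ℕ) _ ↦ by positivity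
  | succ J ih =>
    rw [← sum_sdiff (splitPrimes_mono (pow_le_pow_right₀ hK1.le J.le_succ)), harmonic_succ]
    push_cast
    linarith [hshell J]

lemma exists_mul_loglog_sub_le_sum_splitPrimes {δ : ℝ} (hδ0 : 0 ≤ δ) (hδ : δ < 1 / 2) :
    ∃ c : ℝ, ∀ x : ℝ, 1 < x → δ * log (log x) - c ≤ ∑ p ∈ splitPrimes x, 1 / (p : ℝ) := by
  obtain ⟨K, hK, hpow⟩ := exists_mul_harmonic_le_sum_splitPrimes_pow hδ
  have hK1 : 1 < K := by linarith [exp_one_gt_d9]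
  have hlogK : 1 ≤ log K := by rwa [le_log_iff_exp_le (by linarith)]
  refine ⟨δ * log (log K), fun x hx ↦ ?_⟩
  have hlogx : 0 < log x := log_pos hx
  set J := ⌊log x / log K⌋₊
  have hJx : K ^ J ≤ x := by
    rw [← log_le_log_iff (by positivity) (by linarith), log_pow, ← le_div_iff₀ (by linarith)]
    exact Nat.floor_le (by positivity)
  have hharm : log (log x) - log (log K) ≤ harmonic J := by
    rw [← log_div hlogx.ne' (by linarith)]
    refine (log_le_log (by positivity) (Nat.lt_floor_add_one _).le).trans ?_
    exact_mod_cast log_add_one_le_harmonic J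
  calc δ * log (log x) - δ * log (log K) = δ * (log (log x) - log (log K)) := by ring
    _ ≤ δ * harmonic J := by gcongr
    _ ≤ ∑ p ∈ splitPrimes (K ^ J), 1 / (p : ℝ) := hpow J
    _ ≤ ∑ p ∈ splitPrimes x, 1 / (p : ℝ) :=
        sum_le_sum_of_subset_of_nonneg (splitPrimes_mono hJx) fun _ _ _ ↦ by positivity

lemma log_four_le_two : log 4 ≤ 2 := by
  rw [show (4 : ℝ) = 2 ^ 2 by norm_num, log_pow]
  push_cast
  linarith [log_two_lt_d9]

lemma sum_primesLE_sdiff_one_div_le {z x : ℝ} (hz : 1 < z) (hzx : z ≤ x) :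
    ∑ p ∈ Nat.primesLE ⌊x⌋₊ \ Nat.primesLE ⌊z⌋₊, 1 / (p : ℝ) ≤ (log x + 6) / log z := by
  rw [le_div_iff₀ (log_pos hz), sum_mul]
  calc ∑ p ∈ Nat.primesLE ⌊x⌋₊ \ Nat.primesLE ⌊z⌋₊, 1 / (p : ℝ) * log z
      ≤ ∑ p ∈ Nat.primesLE ⌊x⌋₊ \ Nat.primesLE ⌊z⌋₊, log p / p := by
        refine sum_le_sum fun p hp ↦ ?_
        rw [Finset.mem_sdiff, mem_primesLE_floor (by linarith),
          mem_primesLE_floor (by linarith)] at hp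
        have hzp : z < p := lt_of_not_ge fun h ↦ hp.2 ⟨hp.1.1, h⟩
        rw [one_div_mul_eq_div]
        gcongr
    _ ≤ ∑ p ∈ Nat.primesLE ⌊x⌋₊, log p / p :=
        sum_le_sum_of_subset_of_nonneg sdiff_subset fun _ _ _ ↦ by positivity
    _ ≤ log ⌊x⌋₊ + (log 4 + 4) :=
        sum_primesLE_log_div_le (Nat.floor_pos.2 (hz.le.trans hzx)).ne'
    _ ≤ log x + 6 := by linarith [log_floor_le (hz.le.trans hzx), log_four_le_two]

lemma sum_primesLE_log_le {x : ℝ} (hx : 0 ≤ x) :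
    ∑ p ∈ Nat.primesLE ⌊x⌋₊, log p ≤ 2 * x := by
  rw [← Chebyshev.theta_eq_sum_primesLE]
  exact (Chebyshev.theta_le_log4_mul_x hx).trans (by gcongr; exact log_four_le_two)

lemma card_primesLE_le {x : ℝ} (hx : 1 < x) : (#(Nat.primesLE ⌊x⌋₊) : ℝ) ≤ 6 * x / log x := by
  have hlog : 0 < log x := log_pos hx
  have hsqrt : √x * log x ≤ 2 * x := by
    have hle : log √x ≤ √x := log_le_self (sqrt_nonneg x)
    rw [log_sqrt (by linarith)] at hle
    nlinarith [mul_self_sqrt (by linarith : 0 ≤ x), sqrt_nonneg x]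
  rw [Nat.primesLE_card_eq_primeCounting]
  calc (Nat.primeCounting ⌊x⌋₊ : ℝ) ≤ log 4 * x / log √x + √x := Chebyshev.pi_le_log4_mul_div hx
    _ = (2 * log 4 * x + √x * log x) / log x := by
        rw [log_sqrt (by linarith)]
        field_simp
    _ ≤ 6 * x / log x := by
        gcongr
        nlinarith [log_four_le_two]

/-! ### Elementary symmetric sums with nonnegative weights -/

section ElementarySymmetric

lemma sum_powersetCard_succ_sum_erase {ι M : Type*} [DecidableEq ι] [AddCommMonoid M]
    (s : Finset ι) (k : ℕ) (F : ι → Finset ι → M) :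
    ∑ T ∈ powersetCard (k + 1) s, ∑ i ∈ T, F i (T.erase i) =
      ∑ i ∈ s, ∑ V ∈ powersetCard k (s.erase i), F i V := by
  rw [sum_sigma', sum_sigma']
  refine sum_bij' (fun x _ ↦ ⟨x.2, x.1.erase x.2⟩) (fun x _ ↦ ⟨insert x.1 x.2, x.1⟩) ?_ ?_ ?_ ?_
    fun _ _ ↦ rfl
  · rintro ⟨T, i⟩ h
    simp only [mem_sigma, mem_powersetCard] at h ⊢
    exact ⟨h.1.1 h.2, erase_subset_erase _ h.1.1, by rw [card_erase_of_mem h.2]; lia⟩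
  · rintro ⟨i, V⟩ h
    simp only [mem_sigma, mem_powersetCard] at h ⊢
    have hi : i ∉ V := fun hi ↦ notMem_erase i s (h.2.1 hi)
    exact ⟨⟨insert_subset h.1 (h.2.1.trans (erase_subset i s)),
      by rw [card_insert_of_notMem hi, h.2.2]⟩, mem_insert_self _ _⟩
  · rintro ⟨T, i⟩ h
    simp [insert_erase (mem_sigma.1 h).2]
  · rintro ⟨i, V⟩ h
    simp only [mem_sigma, mem_powersetCard] at h
    have hi : i ∉ V := fun hi ↦ notMem_erase i s (h.2.1 hi)
    simp [erase_insert hi]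

/-- The `k`-th elementary symmetric sum `e_k` of the weights `w i`, `i ∈ s`. -/
noncomputable def esymm {ι : Type*} (w : ι → ℝ) (k : ℕ) (s : Finset ι) : ℝ :=
  ∑ T ∈ powersetCard k s, ∏ i ∈ T, w i

variable {ι : Type*} {w : ι → ℝ}

lemma esymm_zero (s : Finset ι) : esymm w 0 s = 1 := by simp [esymm]

lemma esymm_nonneg (hw : ∀ i, 0 ≤ w i) (k : ℕ) (s : Finset ι) : 0 ≤ esymm w k s :=
  sum_nonneg fun _ _ ↦ prod_nonneg fun i _ ↦ hw i

lemma esymm_mono (hw : ∀ i, 0 ≤ w i) (k : ℕ) {s t : Finset ι} (h : s ⊆ t) :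
    esymm w k s ≤ esymm w k t :=
  sum_le_sum_of_subset_of_nonneg (powersetCard_mono h) fun _ _ _ ↦ prod_nonneg fun i _ ↦ hw i

lemma succ_mul_esymm_succ [DecidableEq ι] (w : ι → ℝ) (k : ℕ) (s : Finset ι) :
    (k + 1) * esymm w (k + 1) s = ∑ i ∈ s, w i * esymm w k (s.erase i) := by
  simp only [esymm, mul_sum]
  rw [← sum_powersetCard_succ_sum_erase s k fun i V ↦ w i * ∏ j ∈ V, w j]
  refine sum_congr rfl fun T hT ↦ ?_
  rw [sum_congr rfl fun i hi ↦ mul_prod_erase T w hi, sum_const, (mem_powersetCard.1 hT).2,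
    nsmul_eq_mul]
  push_cast
  rfl

lemma esymm_one (w : ι → ℝ) (s : Finset ι) : esymm w 1 s = ∑ i ∈ s, w i := by
  classical
  simpa [esymm_zero] using succ_mul_esymm_succ w 0 s

lemma esymm_succ_eq_add_erase [DecidableEq ι] (w : ι → ℝ) (k : ℕ) {s : Finset ι} {i : ι}
    (hi : i ∈ s) :
    esymm w (k + 1) s = esymm w (k + 1) (s.erase i) + w i * esymm w k (s.erase i) := by
  have hmem : ∀ T ∈ powersetCard k (s.erase i), i ∉ T := fun T hT h ↦
    notMem_erase i s ((mem_powersetCard.1 hT).1 h)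
  have hinj : Set.InjOn (insert i) (powersetCard k (s.erase i) : Set (Finset ι)) :=
    fun T hT U hU hTU ↦ by
      rw [← erase_insert (hmem T hT), ← erase_insert (hmem U hU)]
      exact congrArg (erase · i) hTU
  have hdisj : Disjoint (powersetCard (k + 1) (s.erase i))
      ((powersetCard k (s.erase i)).image (insert i)) := by
    refine disjoint_left.2 fun T hT hT' ↦ ?_
    obtain ⟨U, -, rfl⟩ := mem_image.1 hT'
    exact notMem_erase i s ((mem_powersetCard.1 hT).1 (mem_insert_self i U))
  rw [esymm, ← insert_erase hi, powersetCard_succ_insert (notMem_erase i s), sum_union hdisj,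
    sum_image hinj, insert_erase hi, esymm, esymm, mul_sum]
  exact congrArg _ (sum_congr rfl fun T hT ↦ prod_insert (hmem T hT))

lemma esymm_le (hw : ∀ i, 0 ≤ w i) (k : ℕ) (s : Finset ι) :
    esymm w k s ≤ (∑ i ∈ s, w i) ^ k / k.factorial := by
  classical
  have hS : 0 ≤ ∑ i ∈ s, w i := sum_nonneg fun i _ ↦ hw i
  induction k with
  | zero => simp [esymm_zero]
  | succ k ih =>
    have hstep : (k + 1) * esymm w (k + 1) s ≤ (∑ i ∈ s, w i) * esymm w k s := by
      rw [succ_mul_esymm_succ, sum_mul]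
      exact sum_le_sum fun i _ ↦
        mul_le_mul_of_nonneg_left (esymm_mono hw k (erase_subset i s)) (hw i)
    rw [← le_div_iff₀' (by positivity)] at hstep
    refine hstep.trans ?_
    calc (∑ i ∈ s, w i) * esymm w k s / (k + 1)
        ≤ (∑ i ∈ s, w i) * ((∑ i ∈ s, w i) ^ k / k.factorial) / (k + 1) := by gcongr
      _ = (∑ i ∈ s, w i) ^ (k + 1) / (k + 1).factorial := by
          rw [Nat.factorial_succ, pow_succ']
          push_cast
          field_simp

lemma sum_mul_esymm_sub_le (hw : ∀ i, 0 ≤ w i) (k : ℕ) (s : Finset ι) :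
    (∑ i ∈ s, w i) * esymm w (k + 1) s - (∑ i ∈ s, w i ^ 2) * esymm w k s ≤
      (k + 2) * esymm w (k + 2) s := by
  classical
  have hrec : ((k : ℝ) + 2) * esymm w (k + 2) s = ∑ i ∈ s, w i * esymm w (k + 1) (s.erase i) := by
    rw [← succ_mul_esymm_succ]
    push_cast
    ring
  rw [hrec, sum_mul, sum_mul, ← sum_sub_distrib]
  refine sum_le_sum fun i hi ↦ ?_
  have herase : w i ^ 2 * esymm w k (s.erase i) ≤ w i ^ 2 * esymm w k s :=
    mul_le_mul_of_nonneg_left (esymm_mono hw k (erase_subset i s)) (sq_nonneg _)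
  rw [esymm_succ_eq_add_erase w k hi]
  linarith

-- `e_k` falls short of `S ^ k / k!` only by the contribution of the tuples with a repeated index.
lemma le_esymm_add_two (hw : ∀ i, 0 ≤ w i) (k : ℕ) (s : Finset ι) :
    (∑ i ∈ s, w i) ^ (k + 2) / (k + 2).factorial -
      (∑ i ∈ s, w i ^ 2) / 2 * ((∑ i ∈ s, w i) ^ k / k.factorial) ≤ esymm w (k + 2) s := by
  have hrec := sum_mul_esymm_sub_le hw
  have hle := esymm_le hw
  set S := ∑ i ∈ s, w i with hS
  set Q := ∑ i ∈ s, w i ^ 2 with hQ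
  have hS0 : 0 ≤ S := sum_nonneg fun i _ ↦ hw i
  have hQ0 : 0 ≤ Q := sum_nonneg fun _ _ ↦ sq_nonneg _
  induction k with
  | zero =>
    have h2 := hrec 0 s
    rw [← hS, ← hQ, zero_add, esymm_one, esymm_zero] at h2
    norm_num at h2 ⊢
    linarith
  | succ k ih =>
    have hS_ih := mul_le_mul_of_nonneg_left ih hS0
    have hQ_le := mul_le_mul_of_nonneg_left (hle (k + 1) s) hQ0
    have hstep := hrec (k + 1) s
    have halg : S * (S ^ (k + 2) / (k + 2).factorial - Q / 2 * (S ^ k / k.factorial)) -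
        Q * (S ^ (k + 1) / (k + 1).factorial) =
        (k + 3) * (S ^ (k + 1 + 2) / (k + 1 + 2).factorial -
          Q / 2 * (S ^ (k + 1) / (k + 1).factorial)) := by
      simp only [Nat.factorial_succ]
      push_cast
      field_simp
      ring
    push_cast at hstep
    rw [show (k : ℝ) + 1 + 2 = k + 3 by ring] at hstep
    refine le_of_mul_le_mul_left ?_ (by positivity : (0 : ℝ) < k + 3)
    linarith

lemma sum_powersetCard_succ_sum_mul_prod_le (hw : ∀ i, 0 ≤ w i) {g : ι → ℝ} (hg : ∀ i, 0 ≤ g i)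
    (k : ℕ) (s : Finset ι) :
    ∑ T ∈ powersetCard (k + 1) s, (∑ i ∈ T, g i) * ∏ i ∈ T, w i ≤
      (∑ i ∈ s, g i * w i) * esymm w k s := by
  classical
  calc ∑ T ∈ powersetCard (k + 1) s, (∑ i ∈ T, g i) * ∏ i ∈ T, w i
      = ∑ T ∈ powersetCard (k + 1) s, ∑ i ∈ T, g i * w i * ∏ j ∈ T.erase i, w j := by
        refine sum_congr rfl fun T _ ↦ ?_
        rw [sum_mul]
        refine sum_congr rfl fun i hi ↦ ?_
        rw [mul_assoc, mul_prod_erase T w hi]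
    _ = ∑ i ∈ s, g i * w i * esymm w k (s.erase i) := by
        rw [sum_powersetCard_succ_sum_erase s k fun i V ↦ g i * w i * ∏ j ∈ V, w j]
        simp only [esymm, mul_sum]
    _ ≤ (∑ i ∈ s, g i * w i) * esymm w k s := by
        rw [sum_mul]
        exact sum_le_sum fun i _ ↦ mul_le_mul_of_nonneg_left
          (esymm_mono hw k (erase_subset i s)) (mul_nonneg (hg i) (hw i))

-- Markov's inequality for `∑ i ∈ T, g i`.
lemma esymm_sub_le_sum_filter (hw : ∀ i, 0 ≤ w i) {g : ι → ℝ} (hg : ∀ i, 0 ≤ g i) (k : ℕ)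
    (s : Finset ι) {Z : ℝ} (hZ : 0 < Z) :
    esymm w (k + 1) s - (∑ i ∈ s, g i * w i) * esymm w k s / Z ≤
      ∑ T ∈ powersetCard (k + 1) s with ∑ i ∈ T, g i ≤ Z, ∏ i ∈ T, w i := by
  have hprod : ∀ T : Finset ι, 0 ≤ ∏ i ∈ T, w i := fun T ↦ prod_nonneg fun i _ ↦ hw i
  have hlarge : ∑ T ∈ powersetCard (k + 1) s with ¬ ∑ i ∈ T, g i ≤ Z, ∏ i ∈ T, w i ≤
      (∑ i ∈ s, g i * w i) * esymm w k s / Z := by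
    rw [le_div_iff₀ hZ, sum_mul]
    calc ∑ T ∈ powersetCard (k + 1) s with ¬ ∑ i ∈ T, g i ≤ Z, (∏ i ∈ T, w i) * Z
        ≤ ∑ T ∈ powersetCard (k + 1) s with ¬ ∑ i ∈ T, g i ≤ Z, (∑ i ∈ T, g i) * ∏ i ∈ T, w i := by
          refine sum_le_sum fun T hT ↦ ?_
          rw [mul_comm]
          exact mul_le_mul_of_nonneg_right (not_le.1 (mem_filter.1 hT).2).le (hprod T)
      _ ≤ ∑ T ∈ powersetCard (k + 1) s, (∑ i ∈ T, g i) * ∏ i ∈ T, w i :=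
          sum_le_sum_of_subset_of_nonneg (filter_subset _ _) fun T _ _ ↦
            mul_nonneg (sum_nonneg fun i _ ↦ hg i) (hprod T)
      _ ≤ (∑ i ∈ s, g i * w i) * esymm w k s := sum_powersetCard_succ_sum_mul_prod_le hw hg k s
  have hsplit := sum_filter_add_sum_filter_not (powersetCard (k + 1) s)
    (fun T ↦ ∑ i ∈ T, g i ≤ Z) fun T ↦ ∏ i ∈ T, w i
  rw [esymm]
  linarith

end ElementarySymmetric

lemma pow_div_factorial_le {S a : ℝ} (hS : 0 ≤ S) {k j : ℕ} (h : (k + j : ℕ) ≤ a * S) :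
    S ^ k / k.factorial ≤ a ^ j * (S ^ (k + j) / (k + j).factorial) := by
  have hfac : ((k + j).factorial : ℝ) ≤ k.factorial * (a * S) ^ j := by
    calc ((k + j).factorial : ℝ) ≤ k.factorial * (k + j : ℕ) ^ j := by
          rw [← Nat.factorial_mul_ascFactorial]
          exact_mod_cast Nat.mul_le_mul_left _ (Nat.ascFactorial_le_pow_add k j)
      _ ≤ k.factorial * (a * S) ^ j := by gcongr
  rw [mul_div_assoc', div_le_div_iff₀ (by positivity) (by positivity)]
  calc S ^ k * (k + j).factorial ≤ S ^ k * (k.factorial * (a * S) ^ j) := by gcongr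
    _ = a ^ j * S ^ (k + j) * k.factorial := by rw [mul_pow, pow_add]; ring

lemma sum_splitPrimes_one_div_sq_le (x : ℝ) : ∑ p ∈ splitPrimes x, (1 / (p : ℝ)) ^ 2 ≤ 1 / 4 := by
  have hsub : splitPrimes x ⊆ Ioc 4 (⌊x⌋₊ + 4) := fun p hp ↦ by
    obtain ⟨hpx, hp4⟩ := mem_filter.1 hp
    have := Nat.two_le_of_mem_primesLE hpx
    have := Nat.le_of_mem_primesLE hpx
    rw [mem_Ioc]
    lia
  calc ∑ p ∈ splitPrimes x, (1 / (p : ℝ)) ^ 2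
      ≤ ∑ p ∈ Ioc 4 (⌊x⌋₊ + 4), ((p : ℝ) ^ 2)⁻¹ := by
        simp only [one_div, inv_pow]
        exact sum_le_sum_of_subset_of_nonneg hsub fun _ _ _ ↦ by positivity
    _ ≤ ((4 : ℕ) : ℝ)⁻¹ - ((⌊x⌋₊ + 4 : ℕ) : ℝ)⁻¹ :=
        sum_Ioc_inv_sq_le_sub (by norm_num) (Nat.le_add_left _ _)
    _ ≤ 1 / 4 := by
        have : (0 : ℝ) ≤ ((⌊x⌋₊ + 4 : ℕ) : ℝ)⁻¹ := by positivity
        norm_num at this ⊢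
        linarith

/-! ### A lower bound for the number of integers in `𝒟_r(N)` -/

lemma finite_PellDr (r : ℕ) (N : ℝ) : (PellDr r N).Finite :=
  (Set.finite_Iic ⌊N⌋₊).subset fun _ hx ↦ Nat.le_floor hx.2.1.le

lemma squarefree_prod_of_prime {T : Finset ℕ} (hT : ∀ p ∈ T, p.Prime) :
    Squarefree (∏ p ∈ T, p) :=
  squarefree_prod_of_pairwise_isCoprime
    (fun p hp q hq hpq ↦ Nat.coprime_iff_isRelPrime.1 <|
      (Nat.coprime_primes (hT p hp) (hT q hq)).2 hpq)
    fun p hp ↦ (hT p hp).squarefree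

lemma prod_mem_PellDr {T : Finset ℕ} (hT : ∀ p ∈ T, p.Prime ∧ p % 4 = 1) {N : ℝ}
    (hN : ((∏ p ∈ T, p : ℕ) : ℝ) < N) : ∏ p ∈ T, p ∈ PellDr #T N := by
  have hprime : ∀ p ∈ T, p.Prime := fun p hp ↦ (hT p hp).1
  have hpos : 0 < ∏ p ∈ T, p := prod_pos fun p hp ↦ (hprime p hp).pos
  refine ⟨⟨squarefree_prod_of_prime hprime, hpos, fun p hp hdvd ↦ Or.inl (hT p ?_).2⟩, hN,
    by rw [Nat.primeFactors_prod hprime]⟩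
  rw [← Nat.primeFactors_prod hprime]
  exact Nat.mem_primeFactors.2 ⟨hp, hdvd, hpos.ne'⟩

-- Each pair `(T, p)` yields the integer `p * ∏ T`, whose largest prime factor is `p`.
lemma sum_card_splitPrimes_sdiff_le_ncard_PellDr {M N : ℝ} (hM : 0 ≤ M) (hMN : M < N) (z : ℝ)
    (k : ℕ) :
    ∑ T ∈ powersetCard k (splitPrimes z),
      #(splitPrimes (M / (∏ p ∈ T, p : ℕ)) \ splitPrimes z) ≤ (PellDr (k + 1) N).ncard := by
  rw [← card_sigma, ← Set.ncard_coe_finset]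
  set pairs := (powersetCard k (splitPrimes z)).sigma
    fun T ↦ splitPrimes (M / (∏ p ∈ T, p : ℕ)) \ splitPrimes z
  have hsub : ∀ x ∈ pairs, x.1 ⊆ splitPrimes z := fun x hx ↦
    (mem_powersetCard.1 (mem_sigma.1 hx).1).1
  have hnotMem : ∀ x ∈ pairs, x.2 ∉ splitPrimes z := fun x hx ↦
    (Finset.mem_sdiff.1 (mem_sigma.1 hx).2).2
  have hinsert : ∀ x ∈ pairs, x.2 ∉ x.1 := fun x hx h ↦ hnotMem x hx (hsub x hx h)
  have hmem : ∀ x ∈ pairs, x.2.Prime ∧ x.2 % 4 = 1 ∧ (x.2 : ℝ) ≤ M / (∏ p ∈ x.1, p : ℕ) :=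
    fun x hx ↦ (mem_splitPrimes (by positivity)).1 (Finset.mem_sdiff.1 (mem_sigma.1 hx).2).1
  have hprime : ∀ x ∈ pairs, ∀ p ∈ insert x.2 x.1, p.Prime ∧ p % 4 = 1 := fun x hx p hp ↦ by
    obtain rfl | hp := mem_insert.1 hp
    · exact ⟨(hmem x hx).1, (hmem x hx).2.1⟩
    · exact (mem_filter.1 (hsub x hx hp)).imp_left Nat.prime_of_mem_primesLE
  refine Set.ncard_le_ncard_of_injOn (fun x ↦ ∏ p ∈ insert x.2 x.1, p) (fun x hx ↦ ?_)
    (fun x hx y hy hxy ↦ ?_) (finite_PellDr _ _)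
  · have hcard : #(insert x.2 x.1) = k + 1 := by
      rw [card_insert_of_notMem (hinsert x hx), (mem_powersetCard.1 (mem_sigma.1 hx).1).2]
    rw [← hcard]
    refine prod_mem_PellDr (hprime x hx) (lt_of_le_of_lt ?_ hMN)
    rw [prod_insert (hinsert x hx), Nat.cast_mul]
    exact mul_le_of_le_div₀ hM (by positivity) (hmem x hx).2.2
  · have hset : insert x.2 x.1 = insert y.2 y.1 := by
      rw [← Nat.primeFactors_prod fun p hp ↦ (hprime x hx p hp).1,
        ← Nat.primeFactors_prod fun p hp ↦ (hprime y hy p hp).1]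
      exact congrArg Nat.primeFactors hxy
    have hsnd : x.2 = y.2 := by
      have hxy2 : x.2 ∈ insert y.2 y.1 := hset ▸ mem_insert_self _ _
      exact (mem_insert.1 hxy2).resolve_right fun h ↦ hnotMem x hx (hsub y hy h)
    have hfst : x.1 = y.1 := by
      rw [← erase_insert (hinsert x hx), hset, hsnd, erase_insert (hinsert y hy)]
    exact Sigma.ext hfst (heq_of_eq hsnd)

lemma exists_mul_div_log_le_card_splitPrimes_sdiff :
    ∃ c K : ℝ, 0 < c ∧ 1 ≤ K ∧ ∀ x z, 1 ≤ z → K * z ≤ x →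
      c * (x / log x) ≤ #(splitPrimes x \ splitPrimes z) := by
  obtain ⟨c, K, hc, hK⟩ := exists_mul_le_sum_splitPrimes_log
  refine ⟨c / 2, max (max 2 K) (4 / c), by positivity, by simp, fun x z hz hzx ↦ ?_⟩
  have hx : max (max 2 K) (4 / c) ≤ x := (le_mul_of_one_le_right (by positivity) hz).trans hzx
  have hx2 : 2 ≤ x := ((le_max_left _ _).trans (le_max_left _ _)).trans hx
  have hxlog : 0 < log x := log_pos (by linarith)
  have hzc : 4 * z ≤ c * x := by
    have : 4 / c * z ≤ x := le_trans (by gcongr; exact le_max_right _ _) hzx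
    rwa [div_mul_eq_mul_div, div_le_iff₀' hc] at this
  have hsmall : ∑ p ∈ splitPrimes z, log p ≤ 2 * z :=
    (sum_le_sum_of_subset_of_nonneg (splitPrimes_subset_primesLE z) fun p _ _ ↦
      log_natCast_nonneg p).trans (sum_primesLE_log_le (by linarith))
  have hlarge : ∑ p ∈ splitPrimes x \ splitPrimes z, log p ≤
      #(splitPrimes x \ splitPrimes z) * log x := by
    rw [← nsmul_eq_mul]
    refine sum_le_card_nsmul _ _ _ fun p hp ↦ ?_
    obtain ⟨hp1, -, hpx⟩ := (mem_splitPrimes (by linarith)).1 (Finset.mem_sdiff.1 hp).1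
    exact log_le_log (by exact_mod_cast hp1.pos) hpx
  have htotal : c * x ≤ ∑ p ∈ splitPrimes x, log p :=
    hK x (((le_max_right _ _).trans (le_max_left _ _)).trans hx)
  have hzx' : z ≤ x := (le_mul_of_one_le_left (by linarith) (by simp)).trans hzx
  rw [← sum_sdiff (splitPrimes_mono hzx')] at htotal
  rw [mul_div_assoc', div_le_iff₀ hxlog]
  linarith

lemma half_pow_div_factorial_le_sum_filter {z Z : ℝ} {k : ℕ} (hz : 1 ≤ z)
    (hZ : log z + 6 ≤ Z / 10) (hk : (k + 2 : ℕ) ≤ 1.1 * ∑ p ∈ splitPrimes z, 1 / (p : ℝ)) :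
    (∑ p ∈ splitPrimes z, 1 / (p : ℝ)) ^ (k + 2) / (k + 2).factorial / 2 ≤
      ∑ T ∈ powersetCard (k + 2) (splitPrimes z) with ∑ p ∈ T, log (p : ℕ) ≤ Z,
        ∏ p ∈ T, 1 / (p : ℝ) := by
  have hw : ∀ p : ℕ, 0 ≤ 1 / (p : ℝ) := fun p ↦ by positivity
  have hZ0 : 0 < Z := by linarith [log_nonneg hz]
  set S := ∑ p ∈ splitPrimes z, 1 / (p : ℝ)
  have hS : 0 ≤ S := sum_nonneg fun p _ ↦ hw p
  set E := S ^ (k + 2) / (k + 2).factorial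
  have hE : 0 ≤ E := by positivity
  have hmertens : ∑ p ∈ splitPrimes z, log p * (1 / (p : ℝ)) ≤ Z / 10 :=
    calc ∑ p ∈ splitPrimes z, log p * (1 / (p : ℝ))
        ≤ ∑ p ∈ Nat.primesLE ⌊z⌋₊, log p / p := by
          simp only [mul_one_div]
          exact sum_le_sum_of_subset_of_nonneg (splitPrimes_subset_primesLE z)
            fun _ _ _ ↦ by positivity
      _ ≤ log ⌊z⌋₊ + (log 4 + 4) := sum_primesLE_log_div_le (Nat.floor_pos.2 hz).ne'
      _ ≤ Z / 10 := by linarith [log_floor_le hz, log_four_le_two]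
  have hdiag : (∑ p ∈ splitPrimes z, (1 / (p : ℝ)) ^ 2) / 2 * (S ^ k / k.factorial) ≤
      1 / 8 * (1.1 ^ 2 * E) := by
    have := sum_splitPrimes_one_div_sq_le z
    exact mul_le_mul (by linarith) (pow_div_factorial_le hS hk) (by positivity) (by norm_num)
  have htail : (∑ p ∈ splitPrimes z, log p * (1 / (p : ℝ))) *
      esymm (fun p : ℕ ↦ 1 / (p : ℝ)) (k + 1) (splitPrimes z) / Z ≤ 1 / 10 * (1.1 ^ 1 * E) := by
    rw [div_le_iff₀ hZ0, mul_right_comm, one_div_mul_eq_div]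
    exact mul_le_mul hmertens ((esymm_le hw _ _).trans (pow_div_factorial_le hS hk))
      (esymm_nonneg hw _ _) (by positivity)
  have hmain := le_esymm_add_two hw k (splitPrimes z)
  refine le_trans ?_ (esymm_sub_le_sum_filter hw log_natCast_nonneg (k + 1) (splitPrimes z) hZ0)
  linarith

/-- The sum of `1 / p` over the split primes `p ≤ N ^ (1 / 40)`. The exponent is small enough for
most products of about `log log N` such primes to stay below `√N`. -/
noncomputable def recipSum (N : ℝ) : ℝ := ∑ p ∈ splitPrimes (N ^ (1 / 40 : ℝ)), 1 / (p : ℝ)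

/-- The order of magnitude of `|𝒟_r(N)|`, namely `N / log N * S ^ (r - 1) / (r - 1)!` with
`S = recipSum N`. -/
noncomputable def pellScale (r : ℕ) (N : ℝ) : ℝ :=
  N / log N * (recipSum N ^ (r - 1) / (r - 1).factorial)

lemma log_rpow_one_div {N : ℝ} (hN : 0 < N) (a : ℝ) : log (N ^ (1 / a)) = log N / a := by
  rw [log_rpow hN, one_div_mul_eq_div]

lemma exists_mul_le_card_splitPrimes_sdiff_rpow :
    ∃ c : ℝ, 0 < c ∧ ∀ᶠ N : ℝ in atTop, ∀ m : ℝ, 1 ≤ m → log m ≤ log N / 2 →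
      c * (N / log N) * (1 / m) ≤ #(splitPrimes (N / 2 / m) \ splitPrimes (N ^ (1 / 40 : ℝ))) := by
  obtain ⟨c, K, hc, hK, hcount⟩ := exists_mul_div_log_le_card_splitPrimes_sdiff
  refine ⟨c / 2, by positivity, ?_⟩
  have hKN : ∀ᶠ N : ℝ in atTop, 2 * K ≤ N ^ (1 / 4 : ℝ) :=
    (tendsto_rpow_atTop (by norm_num)).eventually_ge_atTop _
  filter_upwards [hKN, eventually_gt_atTop 1] with N hKN hN m hm hmN
  have hN0 : 0 < N := by linarith
  have hz : 1 < N ^ (1 / 40 : ℝ) := one_lt_rpow hN (by norm_num)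
  have hm_le : m ≤ N ^ (1 / 2 : ℝ) := by
    rw [← log_le_log_iff (by linarith) (by positivity), log_rpow_one_div hN0]
    exact hmN
  have hKx : K * N ^ (1 / 40 : ℝ) ≤ N / 2 / m := by
    rw [le_div_iff₀ (by linarith), le_div_iff₀ two_pos]
    calc K * N ^ (1 / 40 : ℝ) * m * 2 = 2 * K * N ^ (1 / 40 : ℝ) * m := by ring
      _ ≤ N ^ (1 / 4 : ℝ) * N ^ (1 / 4 : ℝ) * N ^ (1 / 2 : ℝ) := by
          gcongr
          · exact hN.le
          · norm_num
      _ = N := by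
          rw [← rpow_add hN0, ← rpow_add hN0]
          norm_num
  have hx1 : 1 < N / 2 / m := hz.trans_le ((le_mul_of_one_le_left (by linarith) hK).trans hKx)
  have hxN : N / 2 / m ≤ N := (div_le_self (by positivity) hm).trans (by linarith)
  calc c / 2 * (N / log N) * (1 / m) = c * (N / 2 / m / log N) := by ring
    _ ≤ c * (N / 2 / m / log (N / 2 / m)) := by
        have := log_pos hx1
        gcongr
    _ ≤ _ := hcount _ _ hz.le hKx

theorem exists_mul_pellScale_le_ncard_PellDr :
    ∃ c : ℝ, 0 < c ∧ ∀ᶠ N : ℝ in atTop, ∀ r : ℕ, 3 ≤ r → r ≤ 1.1 * recipSum N →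
      c * pellScale r N ≤ (PellDr r N).ncard := by
  obtain ⟨c, hc, hcount⟩ := exists_mul_le_card_splitPrimes_sdiff_rpow
  refine ⟨c / 2, by positivity, ?_⟩
  filter_upwards [hcount, tendsto_log_atTop.eventually_ge_atTop 240, eventually_gt_atTop 1]
    with N hcount hlogN hN r hr hrS
  obtain ⟨k, rfl⟩ : ∃ k, r = k + 2 + 1 := ⟨r - 3, by lia⟩
  have hmass := half_pow_div_factorial_le_sum_filter (k := k) (Z := log N / 2)
    (one_le_rpow hN.le (by norm_num : (0 : ℝ) ≤ 1 / 40))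
    (by rw [log_rpow_one_div (by linarith)]; linarith)
    (by rw [recipSum] at hrS; push_cast at hrS ⊢; linarith)
  rw [← recipSum] at hmass
  set z := N ^ (1 / 40 : ℝ)
  have hper : ∀ T ∈ powersetCard (k + 2) (splitPrimes z), ∑ p ∈ T, log (p : ℕ) ≤ log N / 2 →
      c * (N / log N) * ∏ p ∈ T, 1 / (p : ℝ) ≤
        #(splitPrimes (N / 2 / (∏ p ∈ T, p : ℕ)) \ splitPrimes z) := fun T hT hlog ↦ by
    have hpos : ∀ p ∈ T, 0 < p := fun p hp ↦ (Nat.prime_of_mem_primesLE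
      (mem_filter.1 ((mem_powersetCard.1 hT).1 hp)).1).pos
    have hprod : ∏ p ∈ T, 1 / (p : ℝ) = 1 / (∏ p ∈ T, p : ℕ) := by
      rw [prod_div_distrib, prod_const_one, Nat.cast_prod]
    rw [hprod]
    refine hcount _ (by exact_mod_cast prod_pos hpos) ?_
    rwa [Nat.cast_prod, log_prod fun p hp ↦ by exact_mod_cast (hpos p hp).ne']
  calc c / 2 * pellScale (k + 2 + 1) N
      = c * (N / log N) * (recipSum N ^ (k + 2) / (k + 2).factorial / 2) := by
        rw [pellScale, Nat.add_sub_cancel]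
        ring
    _ ≤ c * (N / log N) * ∑ T ∈ powersetCard (k + 2) (splitPrimes z) with
          ∑ p ∈ T, log (p : ℕ) ≤ log N / 2, ∏ p ∈ T, 1 / (p : ℝ) := by gcongr
    _ ≤ ∑ T ∈ powersetCard (k + 2) (splitPrimes z) with ∑ p ∈ T, log (p : ℕ) ≤ log N / 2,
          (#(splitPrimes (N / 2 / (∏ p ∈ T, p : ℕ)) \ splitPrimes z) : ℝ) := by
        rw [mul_sum]
        exact sum_le_sum fun T hT ↦ hper T (mem_filter.1 hT).1 (mem_filter.1 hT).2
    _ ≤ ∑ T ∈ powersetCard (k + 2) (splitPrimes z),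
          (#(splitPrimes (N / 2 / (∏ p ∈ T, p : ℕ)) \ splitPrimes z) : ℝ) :=
        sum_le_sum_of_subset_of_nonneg (filter_subset _ _) fun _ _ _ ↦ by positivity
    _ ≤ (PellDr (k + 2 + 1) N).ncard := by
        exact_mod_cast sum_card_splitPrimes_sdiff_le_ncard_PellDr (by linarith) (by linarith)
          z (k + 2)

lemma factorial_le_pow_succ_mul_exp {n : ℕ} (hn : n ≠ 0) :
    (n.factorial : ℝ) ≤ n ^ (n + 1) * exp (1 - n) := by
  induction n, Nat.one_le_iff_ne_zero.2 hn using Nat.le_induction with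
  | base => simp
  | succ n hn1 ih =>
    have : (0 : ℝ) < n := by exact_mod_cast hn1
    have hratio : (n : ℝ) / (n + 1) ≤ exp (-(1 / (n + 1))) :=
      le_trans (by field_simp; ring_nf; rfl) (add_one_le_exp _)
    have hpow : (n : ℝ) ^ (n + 1) ≤ exp (-1) * (n + 1) ^ (n + 1) := by
      rw [← div_le_iff₀ (by positivity), ← div_pow]
      refine (pow_le_pow_left₀ (by positivity) hratio _).trans_eq ?_
      rw [← exp_nat_mul]
      push_cast
      field_simp
    rw [Nat.factorial_succ]
    push_cast
    calc ((n : ℝ) + 1) * n.factorial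
        ≤ (n + 1) * (exp (-1) * (n + 1) ^ (n + 1) * exp (1 - n)) := by
          grw [ih (by lia), hpow]
      _ = (n + 1) ^ (n + 1 + 1) * exp (1 - (n + 1)) := by
          rw [show (1 : ℝ) - (n + 1) = -1 + (1 - n) by ring, exp_add]
          ring

lemma eventually_mul_exp_le_pow_div_factorial :
    ∀ᶠ L : ℝ in atTop, ∀ (S : ℝ) (n : ℕ), 0.47 * L ≤ S → 0.48 * L ≤ n → n ≤ 0.51 * L →
      L * exp (L / 3) ≤ S ^ n / n.factorial := by
  have hexp : ∀ᶠ L : ℝ in atTop, L ^ 2 ≤ exp (-1) * exp (0.08 * L) := by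
    filter_upwards [(isLittleO_pow_exp_pos_mul_atTop (k := 2) (b := 0.08) (by norm_num)).bound
      (exp_pos (-1))] with L hL
    simpa [abs_of_pos (exp_pos _)] using hL
  filter_upwards [hexp, eventually_gt_atTop 0] with L hL hL0 S n hS hn hn'
  have hn0 : n ≠ 0 := by
    rintro rfl
    norm_num at hn
    linarith
  have hnS : n * exp (-0.12) ≤ S := by
    have : exp (-0.12) ≤ 0.9 := by
      rw [exp_neg, inv_le_comm₀ (exp_pos _) (by norm_num)]
      linarith [add_one_le_exp (0.12 : ℝ)]
    nlinarith
  rw [le_div_iff₀ (by positivity)]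
  calc L * exp (L / 3) * n.factorial
      ≤ L * exp (L / 3) * (n ^ (n + 1) * exp (1 - n)) := by
        gcongr
        exact factorial_le_pow_succ_mul_exp hn0
    _ = n ^ n * (L * n) * (exp (L / 3) * exp (1 - n)) := by ring
    _ ≤ n ^ n * (exp (-1) * exp (0.08 * L)) * (exp (L / 3) * exp (1 - n)) := by
        have : L * n ≤ exp (-1) * exp (0.08 * L) := by nlinarith
        gcongr n ^ n * ?_ * _
    _ = n ^ n * exp (0.08 * L + L / 3 - n) := by
        rw [mul_assoc, ← exp_add, ← exp_add, ← exp_add]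
        ring_nf
    _ ≤ n ^ n * exp (n * -0.12) := by
        gcongr
        linarith
    _ = (n * exp (-0.12)) ^ n := by rw [mul_pow, ← exp_nat_mul]
    _ ≤ S ^ n := by gcongr

lemma tendsto_log_log_atTop : Tendsto (fun N : ℝ ↦ log (log N)) atTop atTop :=
  tendsto_log_atTop.comp tendsto_log_atTop

lemma eventually_le_recipSum : ∀ᶠ N : ℝ in atTop, 0.47 * log (log N) ≤ recipSum N := by
  obtain ⟨c, hc⟩ := exists_mul_loglog_sub_le_sum_splitPrimes (δ := 0.48) (by norm_num) (by norm_num)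
  filter_upwards [eventually_gt_atTop 1,
    tendsto_log_log_atTop.eventually_ge_atTop (100 * (c + log 40))] with N hN hL
  have h := hc (N ^ (1 / 40 : ℝ)) (one_lt_rpow hN (by norm_num))
  rw [log_rpow_one_div (by linarith), log_div (log_pos hN).ne' (by norm_num)] at h
  have : 0 ≤ log 40 := by positivity
  rw [recipSum]
  linarith

theorem eventually_mul_exp_le_pellScale :
    ∀ᶠ N : ℝ in atTop, ∀ r : ℕ, |(r : ℝ) - 1 / 2 * log (log N)| ≤ log (log N) / 100 →
      N / log N * (log (log N) * exp (log (log N) / 3)) ≤ pellScale r N := by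
  filter_upwards [eventually_le_recipSum, eventually_gt_atTop 1,
    tendsto_log_log_atTop.eventually eventually_mul_exp_le_pow_div_factorial,
    tendsto_log_log_atTop.eventually_ge_atTop 100] with N hS hN hpow hL r hr
  have hlog := log_pos hN
  rw [abs_le] at hr
  have hr1 : 1 ≤ r := by exact_mod_cast (by linarith : (1 : ℝ) ≤ r)
  rw [pellScale]
  gcongr
  exact hpow _ _ hS (by push_cast [hr1]; linarith) (by push_cast [hr1]; linarith)

/-! ### An upper bound for the number of multiples of `d` in `𝒟_r(N)` -/

/-- The primes `p ≤ x` with `p ≡ 1, 2 (mod 4)`, that is, the possible prime factors of elements of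
`𝒟` up to `x`. -/
noncomputable def pellPrimes (x : ℝ) : Finset ℕ := {p ∈ Nat.primesLE ⌊x⌋₊ | p % 4 = 1 ∨ p % 4 = 2}

lemma mem_pellPrimes {x : ℝ} {p : ℕ} (hx : 0 ≤ x) :
    p ∈ pellPrimes x ↔ p.Prime ∧ (p % 4 = 1 ∨ p % 4 = 2) ∧ (p : ℝ) ≤ x := by
  rw [pellPrimes, mem_filter, mem_primesLE_floor hx]
  tauto

lemma sum_union_le {w : ℕ → ℝ} (hw : ∀ p, 0 ≤ w p) (s t : Finset ℕ) :
    ∑ p ∈ s ∪ t, w p ≤ ∑ p ∈ s, w p + ∑ p ∈ t, w p := by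
  rw [← sum_union_inter]
  exact le_add_of_nonneg_right (sum_nonneg fun p _ ↦ hw p)

lemma sum_pellPrimes_one_div_le {N : ℝ} (hN : 240 ≤ log N) (hN1 : 1 < N) :
    ∑ p ∈ pellPrimes N, 1 / (p : ℝ) ≤ recipSum N + 42 := by
  set z := N ^ (1 / 40 : ℝ) with hz
  have hz1 : 1 < z := one_lt_rpow hN1 (by norm_num)
  have hzN : z ≤ N := rpow_le_self_of_one_le hN1.le (by norm_num)
  have hsub : pellPrimes N ⊆
      (splitPrimes z ∪ {2}) ∪ (Nat.primesLE ⌊N⌋₊ \ Nat.primesLE ⌊z⌋₊) := fun p hp ↦ by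
    obtain ⟨hprime, hmod, hpN⟩ := (mem_pellPrimes (by linarith)).1 hp
    rw [mem_union, mem_union, Finset.mem_sdiff, mem_primesLE_floor (by linarith),
      mem_primesLE_floor (by linarith), mem_splitPrimes (by linarith), mem_singleton,
      ← hprime.even_iff, Nat.even_iff]
    have : p % 4 = 1 ∨ p % 2 = 0 := by lia
    tauto
  have hw : ∀ p : ℕ, 0 ≤ 1 / (p : ℝ) := fun p ↦ by positivity
  have hgap : ∑ p ∈ Nat.primesLE ⌊N⌋₊ \ Nat.primesLE ⌊z⌋₊, 1 / (p : ℝ) ≤ 41 := by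
    refine (sum_primesLE_sdiff_one_div_le hz1 hzN).trans ?_
    rw [hz, log_rpow_one_div (by linarith), div_le_iff₀ (by linarith)]
    linarith
  calc ∑ p ∈ pellPrimes N, 1 / (p : ℝ)
      ≤ (∑ p ∈ splitPrimes z, 1 / (p : ℝ) + ∑ p ∈ {2}, 1 / (p : ℝ)) + 41 := by
        refine (sum_le_sum_of_subset_of_nonneg hsub fun p _ _ ↦ hw p).trans ?_
        exact (sum_union_le hw _ _).trans (add_le_add (sum_union_le hw _ _) hgap)
    _ ≤ recipSum N + 42 := by
        rw [recipSum, sum_singleton]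
        norm_num
        linarith

lemma add_pow_le_exp_mul_pow {S a b : ℝ} {k : ℕ} (hS : 0 < S) (ha : 0 ≤ a) (hk : k ≤ b * S) :
    (S + a) ^ k ≤ exp (a * b) * S ^ k := by
  calc (S + a) ^ k ≤ (exp (a / S) * S) ^ k := by
        gcongr
        calc S + a = (a / S + 1) * S := by field_simp; ring
          _ ≤ exp (a / S) * S := by gcongr; exact add_one_le_exp _
    _ = exp (k * (a / S)) * S ^ k := by rw [mul_pow, ← exp_nat_mul]
    _ ≤ exp (a * b) * S ^ k := by
        gcongr ?_ * _
        rw [exp_le_exp]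
        calc k * (a / S) ≤ b * S * (a / S) := by gcongr
          _ = a * b := by rw [mul_assoc, mul_div_cancel₀ _ hS.ne', mul_comm]

-- Chebyshev's argument: weighting by `log m = ∑ log p` and removing one prime `p` from `m` leaves
-- an inner sum of `log p` over primes `p` in an interval of length `Y / ∏ V`.
lemma card_mul_log_le {s : Finset ℕ} (hs : ∀ p ∈ s, p.Prime) (k : ℕ) {Y Z : ℝ} (hY : 0 ≤ Y)
    (hZ : 0 < Z) :
    #{U ∈ powersetCard (k + 1) s | Z ≤ (∏ p ∈ U, p : ℕ) ∧ (∏ p ∈ U, p : ℕ) ≤ Y} * log Z ≤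
      2 * Y * esymm (fun p : ℕ ↦ 1 / (p : ℝ)) k s := by
  set G := {U ∈ powersetCard (k + 1) s | Z ≤ (∏ p ∈ U, p : ℕ) ∧ (∏ p ∈ U, p : ℕ) ≤ Y}
  set F : ℕ → Finset ℕ → ℝ := fun p V ↦ if (p : ℝ) * (∏ q ∈ V, q : ℕ) ≤ Y then log p else 0
  have hF : ∀ p V, 0 ≤ F p V := fun p V ↦ by
    dsimp only [F]
    split_ifs <;> positivity
  have hlog : ∀ U ∈ G, log Z ≤ ∑ p ∈ U, F p (U.erase p) := fun U hU ↦ by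
    obtain ⟨hUs, hZU, hUY⟩ := mem_filter.1 hU
    have hne : ∀ p ∈ U, (p : ℝ) ≠ 0 := fun p hp ↦
      Nat.cast_ne_zero.2 (hs p ((mem_powersetCard.1 hUs).1 hp)).ne_zero
    refine (log_le_log hZ hZU).trans_eq ?_
    rw [Nat.cast_prod, log_prod hne]
    refine sum_congr rfl fun p hp ↦ (if_pos ?_).symm
    rwa [← Nat.cast_mul, mul_prod_erase U (fun q ↦ q) hp]
  have hinner : ∀ V ∈ powersetCard k s, ∑ p ∈ s, F p V ≤ 2 * Y * ∏ p ∈ V, 1 / (p : ℝ) :=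
    fun V hV ↦ by
    have hpos : (0 : ℝ) < (∏ q ∈ V, q : ℕ) := Nat.cast_pos.2 <| prod_pos fun q hq ↦
      (hs q ((mem_powersetCard.1 hV).1 hq)).pos
    rw [← sum_filter, prod_div_distrib, prod_const_one, ← Nat.cast_prod, mul_one_div,
      mul_div_assoc]
    refine (sum_le_sum_of_subset_of_nonneg (fun p hp ↦ ?_) fun p _ _ ↦
      log_natCast_nonneg p).trans (sum_primesLE_log_le (by positivity))
    rw [mem_primesLE_floor (by positivity), le_div_iff₀ hpos]
    exact (mem_filter.1 hp).imp_left (hs p)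
  calc #G * log Z ≤ ∑ U ∈ G, ∑ p ∈ U, F p (U.erase p) := by
        rw [← nsmul_eq_mul]
        exact card_nsmul_le_sum _ _ _ hlog
    _ ≤ ∑ U ∈ powersetCard (k + 1) s, ∑ p ∈ U, F p (U.erase p) :=
        sum_le_sum_of_subset_of_nonneg (filter_subset _ _) fun U _ _ ↦
          sum_nonneg fun p _ ↦ hF _ _
    _ = ∑ p ∈ s, ∑ V ∈ powersetCard k (s.erase p), F p V := sum_powersetCard_succ_sum_erase s k F
    _ ≤ ∑ p ∈ s, ∑ V ∈ powersetCard k s, F p V :=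
        sum_le_sum fun p _ ↦ sum_le_sum_of_subset_of_nonneg
          (powersetCard_mono (erase_subset p s)) fun V _ _ ↦ hF p V
    _ ≤ 2 * Y * esymm (fun p : ℕ ↦ 1 / (p : ℝ)) k s := by
        rw [sum_comm, esymm, mul_sum]
        exact sum_le_sum hinner

lemma of_mul_mem_PellDr {d y r : ℕ} {N : ℝ} (h : d * y ∈ PellDr r N) :
    Squarefree y ∧ #d.primeFactors + #y.primeFactors = r ∧ y.primeFactors ⊆ pellPrimes N := by
  obtain ⟨⟨hsq, hpos, hmod⟩, hN, hcard⟩ := h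
  obtain ⟨hcop, -, hy⟩ := Nat.squarefree_mul_iff.1 hsq
  refine ⟨hy, ?_, fun p hp ↦ ?_⟩
  · rw [← hcard, hcop.primeFactors_mul, card_union_of_disjoint hcop.disjoint_primeFactors]
  · obtain ⟨hprime, hdvd, -⟩ := Nat.mem_primeFactors.1 hp
    have hdvd' : p ∣ d * y := hdvd.mul_left d
    have hpN : (p : ℝ) ≤ N := le_trans (by exact_mod_cast Nat.le_of_dvd hpos hdvd') hN.le
    exact (mem_pellPrimes ((Nat.cast_nonneg p).trans hpN)).2 ⟨hprime, hmod p hprime hdvd', hpN⟩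

lemma ncard_dvd_PellDr_le_of_le {r d : ℕ} {N Y : ℝ} (hY : 0 ≤ Y) :
    ({x ∈ PellDr r N | d ∣ x ∧ (x : ℝ) ≤ Y}.ncard : ℝ) ≤ Y / d := by
  have hsub : {x ∈ PellDr r N | d ∣ x ∧ (x : ℝ) ≤ Y} ⊆ ({x ∈ Ioc 0 ⌊Y⌋₊ | d ∣ x} : Finset ℕ) :=
    fun x ⟨hx, hdvd, hxY⟩ ↦ mem_coe.2 <| mem_filter.2
      ⟨mem_Ioc.2 ⟨hx.1.2.1, Nat.le_floor hxY⟩, hdvd⟩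
  have hcard := Set.ncard_le_ncard hsub
  rw [Set.ncard_coe_finset, Nat.Ioc_filter_dvd_card_eq_div] at hcard
  calc ({x ∈ PellDr r N | d ∣ x ∧ (x : ℝ) ≤ Y}.ncard : ℝ) ≤ (⌊Y⌋₊ / d : ℕ) := by
        exact_mod_cast hcard
    _ ≤ ⌊Y⌋₊ / d := Nat.cast_div_le
    _ ≤ Y / d := by gcongr; exact Nat.floor_le hY

lemma ncard_dvd_PellDr_mul_log_le_of_lt {d j k : ℕ} {N X : ℝ} (hd : d ≠ 0)
    (hj : #d.primeFactors = j) (hN : 0 ≤ N) (hdX : d ≤ X) :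
    {x ∈ PellDr (j + (k + 1)) N | d ∣ x ∧ X < x}.ncard * log (X / d) ≤
      2 * (N / d) * esymm (fun p : ℕ ↦ 1 / (p : ℝ)) k (pellPrimes N) := by
  have hd0 : (0 : ℝ) < d := by positivity
  have hXd : 1 ≤ X / d := (one_le_div hd0).2 hdX
  refine le_trans ?_ (card_mul_log_le (fun p hp ↦ ((mem_pellPrimes hN).1 hp).1) k
    (by positivity : 0 ≤ N / d) (by positivity : 0 < X / d))
  gcongr
  · exact log_nonneg hXd
  rw [← Set.ncard_coe_finset]
  refine Set.ncard_le_ncard_of_injOn (fun x ↦ (x / d).primeFactors) ?_ ?_ (finite_toSet _)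
  · rintro _ ⟨hx, ⟨y, rfl⟩, hXx⟩
    obtain ⟨hy, hcard, hsub⟩ := of_mul_mem_PellDr hx
    have hxN := hx.2.1
    rw [Nat.cast_mul, mul_comm] at hXx hxN
    rw [Nat.mul_div_cancel_left y hd.bot_lt, mem_coe, mem_filter, mem_powersetCard,
      Nat.prod_primeFactors_of_squarefree hy, div_le_iff₀ hd0, le_div_iff₀ hd0]
    exact ⟨⟨hsub, by lia⟩, hXx.le, hxN.le⟩
  · rintro _ ⟨hx, ⟨y, rfl⟩, -⟩ _ ⟨hx', ⟨y', rfl⟩, -⟩ heq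
    simp only [Nat.mul_div_cancel_left _ hd.bot_lt] at heq
    rw [← Nat.prod_primeFactors_of_squarefree (of_mul_mem_PellDr hx).1, heq,
      Nat.prod_primeFactors_of_squarefree (of_mul_mem_PellDr hx').1]

lemma esymm_pellPrimes_le {N : ℝ} (hN : 240 ≤ log N) (hN1 : 1 < N) {r j k : ℕ}
    (hr : r = j + (k + 1)) (hrS : r ≤ 1.1 * recipSum N) (hS : 0 < recipSum N) :
    N / log N * esymm (fun p : ℕ ↦ 1 / (p : ℝ)) k (pellPrimes N) ≤
      exp 47 * 1.1 ^ j * pellScale r N := by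
  have hk : (k : ℝ) ≤ 1.1 * recipSum N := le_trans (by exact_mod_cast (by lia)) hrS
  have hkj : (k + j : ℕ) ≤ 1.1 * recipSum N := le_trans (by exact_mod_cast (by lia)) hrS
  have hfac := pow_div_factorial_le hS.le hkj
  calc N / log N * esymm (fun p : ℕ ↦ 1 / (p : ℝ)) k (pellPrimes N)
      ≤ N / log N * ((∑ p ∈ pellPrimes N, 1 / (p : ℝ)) ^ k / k.factorial) := by
        gcongr
        exact esymm_le (fun p ↦ by positivity) k _
    _ ≤ N / log N * (exp (42 * 1.1) * recipSum N ^ k / k.factorial) := by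
        gcongr
        exact (pow_le_pow_left₀ (sum_nonneg fun p _ ↦ by positivity)
          (sum_pellPrimes_one_div_le hN hN1) k).trans (add_pow_le_exp_mul_pow hS (by norm_num) hk)
    _ = N / log N * (exp (42 * 1.1) * (recipSum N ^ k / k.factorial)) := by ring
    _ ≤ N / log N * (exp 47 *
          (1.1 ^ j * (recipSum N ^ (k + j) / (k + j).factorial))) := by
        gcongr
        norm_num
    _ = exp 47 * 1.1 ^ j * pellScale r N := by
        rw [pellScale, show r - 1 = k + j by lia]
        ring

lemma ncard_dvd_PellDr_le_of_lt {N : ℝ} (hN : 240 ≤ log N) (hN1 : 1 < N) {r d : ℕ} (hd : d ≠ 0)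
    (hdN : log d ≤ log N / 4) (hdr : #d.primeFactors < r) (hrS : r ≤ 1.1 * recipSum N)
    (hS : 0 < recipSum N) :
    ({x ∈ PellDr r N | d ∣ x ∧ N ^ (1 / 2 : ℝ) < x}.ncard : ℝ) ≤
      8 * exp 47 * 1.1 ^ #d.primeFactors * (pellScale r N / d) := by
  obtain ⟨k, hk⟩ : ∃ k, r = #d.primeFactors + (k + 1) := ⟨r - #d.primeFactors - 1, by lia⟩
  have hd0 : (0 : ℝ) < d := by positivity
  have hX : 0 < N ^ (1 / 2 : ℝ) := by positivity
  have hlogX : log N / 4 ≤ log (N ^ (1 / 2 : ℝ) / d) := by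
    rw [log_div hX.ne' hd0.ne', log_rpow_one_div (by linarith)]
    linarith
  have hdX : (d : ℝ) ≤ N ^ (1 / 2 : ℝ) := by
    rw [← log_le_log_iff hd0 hX, log_rpow_one_div (by linarith)]
    linarith
  have hcount := ncard_dvd_PellDr_mul_log_le_of_lt (N := N) (k := k) hd rfl (by linarith) hdX
  rw [← hk] at hcount
  have hlog : 0 < log N / 4 := by linarith
  calc ({x ∈ PellDr r N | d ∣ x ∧ N ^ (1 / 2 : ℝ) < x}.ncard : ℝ)
      ≤ 2 * (N / d) * esymm (fun p : ℕ ↦ 1 / (p : ℝ)) k (pellPrimes N) / (log N / 4) := by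
        rw [le_div_iff₀ hlog]
        exact (mul_le_mul_of_nonneg_left hlogX (Nat.cast_nonneg _)).trans hcount
    _ = 8 / d * (N / log N * esymm (fun p : ℕ ↦ 1 / (p : ℝ)) k (pellPrimes N)) := by
        field_simp
        ring
    _ ≤ 8 / d * (exp 47 * 1.1 ^ #d.primeFactors * pellScale r N) := by
        gcongr ?_ * ?_
        exact esymm_pellPrimes_le hN hN1 hk hrS hS
    _ = 8 * exp 47 * 1.1 ^ #d.primeFactors * (pellScale r N / d) := by ring

theorem exists_ncard_dvd_PellDr_le (j : ℕ) :
    ∃ C : ℝ, 0 < C ∧ ∀ᶠ N : ℝ in atTop, ∀ r d : ℕ,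
      |(r : ℝ) - 1 / 2 * log (log N)| ≤ log (log N) / 100 → d ≠ 0 → #d.primeFactors = j →
      log d ≤ log N / 4 → ({x ∈ PellDr r N | d ∣ x}.ncard : ℝ) ≤ C * (pellScale r N / d) := by
  refine ⟨1 + 8 * exp 47 * 1.1 ^ j, by positivity, ?_⟩
  have hlog : ∀ᶠ N : ℝ in atTop, N ^ (1 / 2 : ℝ) ≤ N / log N := by
    filter_upwards [(isLittleO_log_rpow_atTop (by norm_num : (0 : ℝ) < 1 / 2)).bound one_pos,
      eventually_gt_atTop 1] with N hN hN1
    rw [one_mul, norm_of_nonneg (log_pos hN1).le, norm_of_nonneg (by positivity)] at hN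
    rw [le_div_iff₀ (log_pos hN1)]
    calc N ^ (1 / 2 : ℝ) * log N ≤ N ^ (1 / 2 : ℝ) * N ^ (1 / 2 : ℝ) := by gcongr
      _ = N := by rw [← rpow_add (by linarith)]; norm_num
  filter_upwards [hlog, eventually_le_recipSum, eventually_mul_exp_le_pellScale,
    tendsto_log_atTop.eventually_ge_atTop 240, eventually_gt_atTop 1,
    tendsto_log_log_atTop.eventually_gt_atTop (max 1 (10 * j))]
    with N hsqrt hS hscale hN hN1 hL r d hr hd rfl hdN
  have hr' := abs_le.1 hr
  obtain ⟨hL1, hLj⟩ := max_lt_iff.1 hL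
  have hsmall : ({x ∈ PellDr r N | d ∣ x ∧ (x : ℝ) ≤ N ^ (1 / 2 : ℝ)}.ncard : ℝ) ≤
      pellScale r N / d := by
    refine (ncard_dvd_PellDr_le_of_le (by positivity)).trans ?_
    gcongr
    refine (hsqrt.trans (le_mul_of_one_le_right (by positivity) ?_)).trans (hscale r hr)
    exact one_le_mul_of_one_le_of_one_le hL1.le (one_le_exp (by linarith))
  have hlarge := ncard_dvd_PellDr_le_of_lt hN hN1 hd hdN (r := r)
    (by exact_mod_cast (by linarith : (#d.primeFactors : ℝ) < r)) (by linarith) (by linarith)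
  have hunion : {x ∈ PellDr r N | d ∣ x} ⊆ {x ∈ PellDr r N | d ∣ x ∧ (x : ℝ) ≤ N ^ (1 / 2 : ℝ)} ∪
      {x ∈ PellDr r N | d ∣ x ∧ N ^ (1 / 2 : ℝ) < x} := fun x ⟨hx, hdvd⟩ ↦
    (le_or_gt (x : ℝ) (N ^ (1 / 2 : ℝ))).imp (⟨hx, hdvd, ·⟩) (⟨hx, hdvd, ·⟩)
  have hncard : ({x ∈ PellDr r N | d ∣ x}.ncard : ℝ) ≤
      {x ∈ PellDr r N | d ∣ x ∧ (x : ℝ) ≤ N ^ (1 / 2 : ℝ)}.ncard +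
        {x ∈ PellDr r N | d ∣ x ∧ N ^ (1 / 2 : ℝ) < x}.ncard := by
    exact_mod_cast (Set.ncard_le_ncard hunion (((finite_PellDr r N).sep _).union
      ((finite_PellDr r N).sep _))).trans (Set.ncard_union_le _ _)
  linarith

/-- The pairs `(N, r)` to which the box argument applies: `N` is large, `r ≤ log log N`, and
`𝒟_r(N)` satisfies, with constant `C`, a weak lower bound for its size and the expected upper bound
for the number of its elements divisible by a given `d` with at most two prime factors. -/
structure IsRegular (C N : ℝ) (r : ℕ) : Prop where
  nonneg : 0 ≤ C
  one_lt : 1 < N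
  eight_le_loglog : 8 ≤ log (log N)
  loglog_pow_le_D₁ : log (log N) ^ 3 ≤ D₁ N
  le_loglog : r ≤ log (log N)
  div_log_mul_le :
    N / log N * (log (log N) * exp (log (log N) / 3)) ≤ C * (PellDr r N).ncard
  ncard_dvd_le : ∀ d : ℕ, #d.primeFactors ∈ ({1, 2} : Set ℕ) → log d ≤ log N / 4 →
    ({x ∈ PellDr r N | d ∣ x}.ncard : ℝ) ≤ C * (PellDr r N).ncard / d

lemma eventually_loglog_pow_le_D₁ : ∀ᶠ N : ℝ in atTop, log (log N) ^ 3 ≤ D₁ N := by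
  have hexp : ∀ᶠ y : ℝ in atTop, y ^ 30 ≤ exp y := by
    filter_upwards [(isLittleO_pow_exp_atTop (n := 30)).bound one_pos, eventually_ge_atTop 0]
      with y hy hy0
    rwa [one_mul, norm_of_nonneg (by positivity), norm_of_nonneg (by positivity)] at hy
  filter_upwards [((tendsto_rpow_atTop (by norm_num : (0 : ℝ) < 1 / 10)).comp
    tendsto_log_log_atTop).eventually hexp, tendsto_log_log_atTop.eventually_ge_atTop 0]
    with N hN hL
  rw [Function.comp_apply, ← rpow_mul_natCast hL] at hN
  norm_num at hN
  rwa [D₁]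

theorem exists_isRegular : ∃ C : ℝ, 0 < C ∧ ∀ᶠ N : ℝ in atTop, ∀ r : ℕ,
    |(r : ℝ) - 1 / 2 * log (log N)| ≤ log (log N) / 100 → IsRegular C N r := by
  obtain ⟨c, hc, hlower⟩ := exists_mul_pellScale_le_ncard_PellDr
  obtain ⟨C₁, hC₁, hupper₁⟩ := exists_ncard_dvd_PellDr_le 1
  obtain ⟨C₂, hC₂, hupper₂⟩ := exists_ncard_dvd_PellDr_le 2
  refine ⟨(1 + C₁ + C₂) / c, by positivity, ?_⟩
  filter_upwards [hlower, hupper₁, hupper₂, eventually_le_recipSum, eventually_mul_exp_le_pellScale,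
    eventually_loglog_pow_le_D₁, tendsto_log_log_atTop.eventually_ge_atTop 8,
    eventually_gt_atTop 1] with N hlower hupper₁ hupper₂ hS hscale hD₁ hL hN r hr
  have hr' := abs_le.1 hr
  have hpell : ∀ a : ℝ, 0 ≤ a → a ≤ 1 + C₁ + C₂ →
      a * pellScale r N ≤ (1 + C₁ + C₂) / c * (PellDr r N).ncard := fun a ha haC ↦
    calc a * pellScale r N ≤ a * ((PellDr r N).ncard / c) := by
          gcongr
          rw [le_div_iff₀' hc]
          exact hlower r (by exact_mod_cast (by linarith : (2 : ℝ) < r)) (by linarith)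
      _ ≤ (1 + C₁ + C₂) * ((PellDr r N).ncard / c) := by gcongr
      _ = (1 + C₁ + C₂) / c * (PellDr r N).ncard := by ring
  refine ⟨by positivity, hN, hL, hD₁, by linarith,
    (hscale r hr).trans (by simpa using hpell 1 (by norm_num) (by linarith)), fun d hd hdN ↦ ?_⟩
  have hd0 : d ≠ 0 := by
    rintro rfl
    simp at hd
  have hdiv : ∀ a : ℝ, 0 ≤ a → a ≤ 1 + C₁ + C₂ →
      a * (pellScale r N / d) ≤ (1 + C₁ + C₂) / c * (PellDr r N).ncard / d := fun a ha haC ↦ by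
    rw [← mul_div_assoc]
    exact div_le_div_of_nonneg_right (hpell a ha haC) (Nat.cast_nonneg d)
  rcases hd with hd | hd
  · exact (hupper₁ r d hr hd0 hd hdN).trans (hdiv C₁ hC₁.le (by linarith))
  · exact (hupper₂ r d hr hd0 hd hdN).trans (hdiv C₂ hC₂.le (by linarith))

namespace IsRegular

variable {C N : ℝ} {r : ℕ}

lemma log_pos (h : IsRegular C N r) : 0 < log N := Real.log_pos h.one_lt

lemma exp_loglog (h : IsRegular C N r) : exp (log (log N)) = log N := exp_log h.log_pos

lemma five_mul_loglog_le (h : IsRegular C N r) : 5 * log (log N) ≤ log N := by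
  have hL := h.eight_le_loglog
  have hquad := quadratic_le_exp_of_nonneg (by linarith : 0 ≤ log (log N))
  rw [h.exp_loglog] at hquad
  nlinarith

lemma forty_le_log (h : IsRegular C N r) : 40 ≤ log N := by
  have hL := h.eight_le_loglog
  have hquad := quadratic_le_exp_of_nonneg (by linarith : 0 ≤ log (log N))
  rw [h.exp_loglog] at hquad
  nlinarith

lemma log_D₁_le (h : IsRegular C N r) : log (D₁ N) ≤ log (log N) := by
  rw [D₁, log_exp]
  exact rpow_le_self_of_one_le (by linarith [h.eight_le_loglog]) (by norm_num)

lemma ncard_prime_dvd_le (h : IsRegular C N r) {p : ℕ} (hp : p.Prime) (hpN : log p ≤ log N / 4) :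
    ({x ∈ PellDr r N | p ∣ x}.ncard : ℝ) ≤ C * (PellDr r N).ncard / p :=
  h.ncard_dvd_le p (by simp [hp.primeFactors]) hpN

lemma ncard_mul_dvd_le (h : IsRegular C N r) {p q : ℕ} (hp : p.Prime) (hq : q.Prime) (hpq : p ≠ q)
    (hpqN : log p + log q ≤ log N / 4) :
    ({x ∈ PellDr r N | p * q ∣ x}.ncard : ℝ) ≤ C * (PellDr r N).ncard / (p * q) := by
  rw [← log_mul (Nat.cast_ne_zero.2 hp.ne_zero) (Nat.cast_ne_zero.2 hq.ne_zero), ← Nat.cast_mul]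
    at hpqN
  rw [← Nat.cast_mul]
  refine h.ncard_dvd_le (p * q) (Or.inr ?_) hpqN
  rw [Nat.primeFactors_mul hp.ne_zero hq.ne_zero, hp.primeFactors, hq.primeFactors,
    singleton_union, card_pair hpq]
  rfl

end IsRegular

/-! ### Boxes -/

/-- The set `W(F)` of the paper, for boxes of compression parameter `c`: the elements of `𝒟_r(N)`
sharing a box with a multiple of `F`. -/
def boxNeighbors (N c : ℝ) (r F : ℕ) : Set ℕ :=
  {x ∈ PellDr r N | ∃ (k : ℕ) (B : Set ℕ), k ≤ r ∧ IsBox N c k r B ∧ (∃ x' ∈ B, F ∣ x') ∧ x ∈ B}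

lemma exists_coordinates_of_isBox {N c : ℝ} {k r : ℕ} {B : Set ℕ} (hc : 0 < c)
    (hB : IsBox N c k r B) :
    ∃ X : ℕ → Finset ℕ,
      (∀ i ∈ Icc 1 r, ∀ q ∈ X i, q.Prime ∧
        ∀ p ∈ X i, |(p : ℝ) - q| ≤ q / c ∧ (q < D₁ N → p = q)) ∧
      ∀ x ∈ B, ∃ a : ℕ → ℕ, (∀ i ∈ Icc 1 r, a i ∈ X i) ∧ x = ∏ i ∈ Icc 1 r, a i := by
  obtain ⟨-, X, p, s, hp, -, hs, -, hXp, hXs, -, rfl, -⟩ := hB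
  refine ⟨X, fun i hi q hq ↦ ?_, fun x ⟨a, ha, hx⟩ ↦
    ⟨a, fun i hi ↦ ha i (mem_Icc.1 hi).1 (mem_Icc.1 hi).2, hx⟩⟩
  obtain ⟨hi1, hir⟩ := mem_Icc.1 hi
  rcases le_or_gt i k with hik | hki
  · rw [hXp i hi1 hik] at hq ⊢
    obtain rfl := mem_singleton.1 hq
    refine ⟨(hp i hi1 hik).1, fun q hq ↦ ?_⟩
    rw [mem_singleton.1 hq, sub_self, abs_zero]
    exact ⟨by positivity, fun _ ↦ rfl⟩
  · obtain ⟨hprime, -, hsq, hqs⟩ := (hXs i hki hir q).1 hq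
    refine ⟨hprime, fun p hp ↦ ?_⟩
    obtain ⟨-, -, hsp, hps⟩ := (hXs i hki hir p).1 hp
    have hsc : s i / c ≤ q / c := by gcongr
    rw [mul_add, mul_one, mul_one_div] at hqs hps
    exact ⟨abs_sub_le_iff.2 ⟨by linarith, by linarith⟩, fun hqD ↦ by linarith [hs i hki hir]⟩

lemma exists_injOn_primeFactors_of_isBox {N c : ℝ} {k r F x x' : ℕ} {B : Set ℕ} (hc : 0 < c)
    (hB : IsBox N c k r B) (hx' : x' ∈ B) (hF : F ∣ x') (hx : x ∈ B) (hsq : Squarefree x) :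
    ∃ g : ℕ → ℕ, Set.InjOn g F.primeFactors ∧ ∀ q ∈ F.primeFactors,
      g q ∈ x.primeFactors ∧ |(g q : ℝ) - q| ≤ q / c ∧ (q < D₁ N → g q = q) := by
  obtain ⟨X, hX, hBX⟩ := exists_coordinates_of_isBox hc hB
  obtain ⟨a, ha, rfl⟩ := hBX x' hx'
  obtain ⟨b, hb, rfl⟩ := hBX x hx
  have hindex : ∀ q ∈ F.primeFactors, ∃ i ∈ Icc 1 r, q = a i := fun q hq ↦ by
    obtain ⟨hprime, hqF, -⟩ := Nat.mem_primeFactors.1 hq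
    obtain ⟨i, hi, hqi⟩ := (Prime.dvd_finsetProd_iff hprime.prime _).1 (hqF.trans hF)
    exact ⟨i, hi, (Nat.prime_dvd_prime_iff_eq hprime (hX i hi _ (ha i hi)).1).1 hqi⟩
  choose! idx hidx hqa using hindex
  refine ⟨fun q ↦ b (idx q), fun q hq q' hq' heq ↦ ?_, fun q hq ↦ ?_⟩
  · suffices idx q = idx q' by rw [hqa q hq, hqa q' hq', this]
    by_contra hne
    have hpair : b (idx q) * b (idx q) ∣ ∏ i ∈ Icc 1 r, b i := by
      nth_rw 2 [show b (idx q) = b (idx q') from heq]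
      rw [← prod_pair hne]
      exact prod_dvd_prod_of_subset _ _ b
        (insert_subset (hidx q hq) (singleton_subset_iff.2 (hidx q' hq')))
    exact (hX _ (hidx q hq) _ (hb _ (hidx q hq))).1.not_isUnit (hsq _ hpair)
  · have hi := hidx q hq
    have hnear := (hX _ hi _ (ha _ hi)).2 _ (hb _ hi)
    rw [← hqa q hq] at hnear
    exact ⟨Nat.mem_primeFactors.2 ⟨(hX _ hi _ (hb _ hi)).1, dvd_prod_of_mem b hi, hsq.ne_zero⟩,
      hnear⟩

lemma exists_injOn_of_mem_boxNeighbors {N c : ℝ} {r F x : ℕ} (hc : 0 < c)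
    (hx : x ∈ boxNeighbors N c r F) :
    ∃ g : ℕ → ℕ, Set.InjOn g F.primeFactors ∧ ∀ q ∈ F.primeFactors,
      g q ∈ x.primeFactors ∧ |(g q : ℝ) - q| ≤ q / c ∧ (q < D₁ N → g q = q) := by
  obtain ⟨hxD, k, B, -, hB, ⟨x', hx', hF⟩, hxB⟩ := hx
  exact exists_injOn_primeFactors_of_isBox hc hB hx' hF hxB hxD.1.1

lemma lt_of_mem_boxNeighbors {N c : ℝ} {r F x : ℕ} (hx : x ∈ boxNeighbors N c r F) : F < N := by
  obtain ⟨-, k, B, -, ⟨-, X, p, s, -, -, -, -, -, -, -, -, hBN⟩, ⟨x', hx', hF⟩, -⟩ := hx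
  exact lt_of_le_of_lt (Nat.cast_le.2 (Nat.le_of_dvd (hBN hx').1.2.1 hF)) (hBN hx').2

lemma card_primeFactors_le_of_mem_boxNeighbors {N c : ℝ} {r F x : ℕ} (hc : 0 < c)
    (hx : x ∈ boxNeighbors N c r F) : #F.primeFactors ≤ r := by
  obtain ⟨g, hinj, hg⟩ := exists_injOn_of_mem_boxNeighbors hc hx
  rw [← hx.1.2.2]
  exact card_le_card_of_injOn g (fun q hq ↦ (hg q hq).1) hinj

lemma finite_boxNeighbors (N c : ℝ) (r F : ℕ) : (boxNeighbors N c r F).Finite :=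
  (finite_PellDr r N).subset fun _ hx ↦ hx.1

lemma ncard_le_card_mul_of_exists_dvd {S W : Set ℕ} {P : Finset ℕ} {b : ℝ} (hS : S.Finite)
    (hW : ∀ x ∈ W, x ∈ S ∧ ∃ d ∈ P, d ∣ x) (hP : ∀ d ∈ P, ({x ∈ S | d ∣ x}.ncard : ℝ) ≤ b) :
    (W.ncard : ℝ) ≤ #P * b := by
  have hsub : W ⊆ ⋃ d ∈ P, {x ∈ S | d ∣ x} := fun x hx ↦ by
    obtain ⟨hxS, d, hd, hdx⟩ := hW x hx
    exact Set.mem_biUnion hd ⟨hxS, hdx⟩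
  have hfin : (⋃ d ∈ P, {x ∈ S | d ∣ x}).Finite :=
    P.finite_toSet.biUnion fun d _ ↦ hS.subset (Set.sep_subset _ _)
  have hcard : (W.ncard : ℝ) ≤ ∑ d ∈ P, ({x ∈ S | d ∣ x}.ncard : ℝ) := by
    exact_mod_cast (Set.ncard_le_ncard hsub hfin).trans (Finset.set_ncard_biUnion_le P _)
  rw [← nsmul_eq_mul]
  exact hcard.trans (sum_le_card_nsmul _ _ _ hP)

lemma ncard_le_card_mul_card_mul_of_exists_mul_dvd {S W : Set ℕ} {P Q : Finset ℕ} {b : ℝ}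
    (hS : S.Finite) (hb : 0 ≤ b)
    (hW : ∀ x ∈ W, x ∈ S ∧ ∃ p ∈ P, ∃ q ∈ Q, p ≠ q ∧ p * q ∣ x)
    (hPQ : ∀ p ∈ P, ∀ q ∈ Q, p ≠ q → ({x ∈ S | p * q ∣ x}.ncard : ℝ) ≤ b) :
    (W.ncard : ℝ) ≤ #P * #Q * b := by
  set R := image (fun z : ℕ × ℕ ↦ z.1 * z.2) {z ∈ P ×ˢ Q | z.1 ≠ z.2}
  have hcard : (#R : ℝ) ≤ #P * #Q := by
    exact_mod_cast card_image_le.trans ((card_le_card (filter_subset _ _)).trans_eq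
      (card_product _ _))
  have hcover : (W.ncard : ℝ) ≤ #R * b := by
    refine ncard_le_card_mul_of_exists_dvd hS (fun x hx ↦ ?_) fun d hd ↦ ?_
    · obtain ⟨hxS, p, hp, q, hq, hpq, hdvd⟩ := hW x hx
      exact ⟨hxS, p * q, mem_image.2 ⟨(p, q), mem_filter.2 ⟨mk_mem_product hp hq, hpq⟩, rfl⟩, hdvd⟩
    · obtain ⟨⟨p, q⟩, hpq, rfl⟩ := mem_image.1 hd
      obtain ⟨hmem, hne⟩ := mem_filter.1 hpq
      exact hPQ p (mem_product.1 hmem).1 q (mem_product.1 hmem).2 hne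
  exact hcover.trans (by gcongr)

/-- The primes `p` with `|p - q| ≤ ε q`. -/
noncomputable def primesNear (ε : ℝ) (q : ℕ) : Finset ℕ :=
  {p ∈ Nat.primesLE ⌊(1 + ε) * q⌋₊ | |(p : ℝ) - q| ≤ ε * q}

lemma mem_primesNear {ε : ℝ} {q p : ℕ} (hε : 0 ≤ ε) :
    p ∈ primesNear ε q ↔ p.Prime ∧ |(p : ℝ) - q| ≤ ε * q := by
  rw [primesNear, mem_filter, mem_primesLE_floor (by positivity), and_assoc]
  refine and_congr_right fun _ ↦ and_iff_right_of_imp fun h ↦ ?_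
  linarith [(abs_le.1 h).2]

lemma card_primesNear_le {ε : ℝ} (q : ℕ) (hε : 0 ≤ ε) :
    (#(primesNear ε q) : ℝ) ≤ 2 * (ε * q) + 1 := by
  have hsub : primesNear ε q ⊆ Icc ⌈(1 - ε) * q⌉₊ ⌊(1 + ε) * q⌋₊ := fun p hp ↦ by
    have hnear := abs_le.1 ((mem_primesNear hε).1 hp).2
    exact mem_Icc.2 ⟨Nat.ceil_le.2 (by linarith), Nat.le_floor (by linarith)⟩
  have hfloor : (⌊(1 + ε) * q⌋₊ : ℝ) ≤ (1 + ε) * q := Nat.floor_le (by positivity)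
  have hceil : (1 - ε) * q ≤ ⌈(1 - ε) * q⌉₊ := Nat.le_ceil _
  have hceil' : ⌈(1 - ε) * q⌉₊ ≤ ⌊(1 + ε) * q⌋₊ + 1 := by
    refine Nat.ceil_le.2 ?_
    have := Nat.lt_floor_add_one ((1 + ε) * q)
    push_cast
    nlinarith [(Nat.cast_nonneg q : (0 : ℝ) ≤ q)]
  calc (#(primesNear ε q) : ℝ) ≤ #(Icc ⌈(1 - ε) * q⌉₊ ⌊(1 + ε) * q⌋₊) := by
        exact_mod_cast card_le_card hsub
    _ = ⌊(1 + ε) * q⌋₊ + 1 - ⌈(1 - ε) * q⌉₊ := by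
        rw [Nat.card_Icc, Nat.cast_sub hceil']
        push_cast
        rfl
    _ ≤ 2 * (ε * q) + 1 := by linarith

lemma card_primesNear_half_le {q : ℕ} (hq : 2 ≤ q) :
    (#(primesNear (1 / 2) q) : ℝ) ≤ 9 * q / log q := by
  have hq' : (2 : ℝ) ≤ q := by exact_mod_cast hq
  have hlog : 0 < log q := log_pos (by linarith)
  calc (#(primesNear (1 / 2) q) : ℝ) ≤ #(Nat.primesLE ⌊(1 + 1 / 2) * (q : ℝ)⌋₊) := by
        exact_mod_cast card_le_card (filter_subset _ _)
    _ ≤ 6 * ((1 + 1 / 2) * q) / log ((1 + 1 / 2) * q) := card_primesLE_le (by linarith)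
    _ ≤ 6 * ((1 + 1 / 2) * q) / log q := by gcongr; linarith
    _ = 9 * q / log q := by ring

lemma half_le_of_mem_primesNear {ε : ℝ} {q p : ℕ} (hε : 0 ≤ ε) (hε2 : ε ≤ 1 / 2)
    (hp : p ∈ primesNear ε q) : (q : ℝ) / 2 ≤ p := by
  have hnear := abs_le.1 ((mem_primesNear hε).1 hp).2
  have : ε * q ≤ 1 / 2 * q := by gcongr
  linarith

lemma log_le_of_mem_primesNear {ε : ℝ} {q p : ℕ} (hε : 0 ≤ ε) (hε2 : ε ≤ 1 / 2) (hq : q ≠ 0)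
    (hp : p ∈ primesNear ε q) : log p ≤ log q + 1 := by
  obtain ⟨hprime, hnear⟩ := (mem_primesNear hε).1 hp
  have hεq : ε * q ≤ 1 / 2 * q := by gcongr
  have hp2 : (p : ℝ) ≤ 2 * q := by linarith [abs_le.1 hnear]
  calc log p ≤ log (2 * q) := log_le_log (Nat.cast_pos.2 hprime.pos) hp2
    _ = log 2 + log q := log_mul two_ne_zero (Nat.cast_ne_zero.2 hq)
    _ ≤ log q + 1 := by linarith [log_two_lt_d9]

/-! ### The elements sharing a box with a multiple of a single `F` -/

section SingleDivisor

variable {C N c ε A : ℝ} {r F q q' : ℕ}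

lemma exists_injOn_mem_primesNear {x : ℕ} (hc : 0 < c) (hε : 0 ≤ ε)
    (hx : x ∈ boxNeighbors N c r F) :
    ∃ g : ℕ → ℕ, Set.InjOn g F.primeFactors ∧ ∀ q ∈ F.primeFactors,
      1 / c ≤ ε ∨ q < D₁ N → g q ∈ primesNear ε q ∧ g q ∣ x := by
  obtain ⟨g, hinj, hg⟩ := exists_injOn_of_mem_boxNeighbors hc hx
  refine ⟨g, hinj, fun q hq hεq ↦ ?_⟩
  obtain ⟨hgx, hnear, hsmall⟩ := hg q hq
  refine ⟨(mem_primesNear hε).2 ⟨Nat.prime_of_mem_primeFactors hgx, ?_⟩,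
    Nat.dvd_of_mem_primeFactors hgx⟩
  rcases hεq with hεc | hqD
  · refine hnear.trans ?_
    rw [← one_div_mul_eq_div]
    gcongr
  · rw [hsmall hqD, sub_self, abs_zero]
    positivity

lemma ncard_boxNeighbors_le_card_primesNear_mul (hc : 0 < c) (hε : 0 ≤ ε) (hε2 : ε ≤ 1 / 2)
    (hq : q ∈ F.primeFactors) (hεq : 1 / c ≤ ε ∨ q < D₁ N) (hA : 0 ≤ A)
    (hdvd : ∀ p ∈ primesNear ε q, ({x ∈ PellDr r N | p ∣ x}.ncard : ℝ) ≤ A / p) :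
    ((boxNeighbors N c r F).ncard : ℝ) ≤ #(primesNear ε q) * (A / (q / 2)) := by
  have hq0 : (0 : ℝ) < q := Nat.cast_pos.2 (Nat.pos_of_mem_primeFactors hq)
  refine ncard_le_card_mul_of_exists_dvd (finite_PellDr r N) (fun x hx ↦ ⟨hx.1, ?_⟩) fun p hp ↦ ?_
  · obtain ⟨g, -, hg⟩ := exists_injOn_mem_primesNear hc hε hx
    exact ⟨g q, hg q hq hεq⟩
  · refine (hdvd p hp).trans ?_
    gcongr
    exact half_le_of_mem_primesNear hε hε2 hp

lemma ncard_boxNeighbors_le_div_log (hc : 2 ≤ c) (hq : q ∈ F.primeFactors) (hA : 0 ≤ A)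
    (hdvd : ∀ p ∈ primesNear (1 / 2) q, ({x ∈ PellDr r N | p ∣ x}.ncard : ℝ) ≤ A / p) :
    ((boxNeighbors N c r F).ncard : ℝ) ≤ 18 * A / log q := by
  have hq0 : (0 : ℝ) < q := Nat.cast_pos.2 (Nat.pos_of_mem_primeFactors hq)
  calc ((boxNeighbors N c r F).ncard : ℝ)
      ≤ #(primesNear (1 / 2) q) * (A / (q / 2)) :=
        ncard_boxNeighbors_le_card_primesNear_mul (by linarith) (by norm_num) le_rfl hq
          (Or.inl (one_div_le_one_div_of_le two_pos hc)) hA hdvd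
    _ ≤ 9 * q / log q * (A / (q / 2)) := by
        gcongr
        exact card_primesNear_half_le (Nat.prime_of_mem_primeFactors hq).two_le
    _ = 18 * A / log q := by field_simp; ring

lemma ncard_boxNeighbors_le_of_log_le (h : IsRegular C N r) (hc : 0 < c) (hε : 0 ≤ ε)
    (hε2 : ε ≤ 1 / 2) (hq : q ∈ F.primeFactors) (hqN : log q ≤ log N / 5)
    (hεq : 1 / c ≤ ε ∨ q < D₁ N) :
    ((boxNeighbors N c r F).ncard : ℝ) ≤ C * (PellDr r N).ncard * (4 * ε + 2 / q) := by
  have hC := h.nonneg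
  have hq0 : (0 : ℝ) < q := Nat.cast_pos.2 (Nat.pos_of_mem_primeFactors hq)
  calc ((boxNeighbors N c r F).ncard : ℝ)
      ≤ #(primesNear ε q) * (C * (PellDr r N).ncard / (q / 2)) := by
        refine ncard_boxNeighbors_le_card_primesNear_mul hc hε hε2 hq hεq (by positivity)
          fun p hp ↦ h.ncard_prime_dvd_le ((mem_primesNear hε).1 hp).1 ?_
        linarith [h.forty_le_log,
          log_le_of_mem_primesNear hε hε2 (Nat.pos_of_mem_primeFactors hq).ne' hp]
    _ ≤ (2 * (ε * q) + 1) * (C * (PellDr r N).ncard / (q / 2)) := by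
        gcongr
        exact card_primesNear_le q hε
    _ = C * (PellDr r N).ncard * (4 * ε + 2 / q) := by field_simp; ring

lemma log_eq_sum_primeFactors (hF : Squarefree F) : log F = ∑ p ∈ F.primeFactors, log (p : ℕ) := by
  conv_lhs => rw [← Nat.prod_primeFactors_of_squarefree hF]
  rw [Nat.cast_prod, log_prod fun p hp ↦
    Nat.cast_ne_zero.2 (Nat.prime_of_mem_primeFactors hp).ne_zero]

lemma log_le_two_mul_of_forall_primeFactors_le (hF : Squarefree F)
    (hq : ∀ p ∈ F.primeFactors, p ≤ q) : log F ≤ 2 * q := by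
  rw [log_eq_sum_primeFactors hF]
  refine (sum_le_sum_of_subset_of_nonneg (fun p hp ↦ ?_) fun p _ _ ↦
    log_natCast_nonneg p).trans (sum_primesLE_log_le (Nat.cast_nonneg q))
  rw [mem_primesLE_floor (Nat.cast_nonneg q)]
  exact ⟨Nat.prime_of_mem_primeFactors hp, Nat.cast_le.2 (hq p hp)⟩

lemma log_le_mul_log_of_forall_primeFactors_le {L : ℝ} (hF : Squarefree F)
    (hcard : #F.primeFactors ≤ L) (hmax : ∀ p ∈ F.primeFactors, p ≤ q) : log F ≤ L * log q := by
  rw [log_eq_sum_primeFactors hF]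
  refine (sum_le_card_nsmul _ _ (log q) fun p hp ↦ log_le_log
    (Nat.cast_pos.2 (Nat.pos_of_mem_primeFactors hp)) (Nat.cast_le.2 (hmax p hp))).trans ?_
  rw [nsmul_eq_mul]
  gcongr

lemma exists_primeFactor_ne_of_lt_log {L : ℝ} (hL : 2 ≤ L) (hF : Squarefree F)
    (hcard : #F.primeFactors ≤ L) (hq : q ∈ F.primeFactors) (hFL : L ^ 3 < log F)
    (hFq : 2 * log q < log F) : ∃ q' ∈ F.primeFactors, q' ≠ q ∧ L < log q' := by
  by_contra! hsmall
  have hrest : ∑ p ∈ F.primeFactors.erase q, log (p : ℕ) ≤ L * L := by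
    refine (sum_le_card_nsmul _ _ L fun p hp ↦
      hsmall p (mem_of_mem_erase hp) (ne_of_mem_erase hp)).trans ?_
    rw [nsmul_eq_mul]
    gcongr
    exact le_trans (Nat.cast_le.2 (card_le_card (erase_subset _ _))) hcard
  rw [log_eq_sum_primeFactors hF, ← add_sum_erase _ _ hq] at hFL hFq
  nlinarith

lemma ncard_boxNeighbors_le_of_lt_D₁ (h : IsRegular C N r) (hc : 0 < c) (hF : Squarefree F)
    (hq : q ∈ F.primeFactors) (hmax : ∀ p ∈ F.primeFactors, p ≤ q) (hqD : q < D₁ N) :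
    ((boxNeighbors N c r F).ncard : ℝ) ≤ C * (PellDr r N).ncard * (4 / log F) := by
  have hC := h.nonneg
  have hprime := Nat.prime_of_mem_primeFactors hq
  have hq0 : (0 : ℝ) < q := Nat.cast_pos.2 hprime.pos
  have hlogF : 0 < log F := log_pos (Nat.one_lt_cast.2 (Nat.nonempty_primeFactors.1 ⟨q, hq⟩))
  have hlogq : log q ≤ log (D₁ N) := log_le_log hq0 hqD.le
  refine (ncard_boxNeighbors_le_of_log_le h hc le_rfl (by norm_num) hq ?_ (Or.inr hqD)).trans ?_
  · linarith [h.log_D₁_le, h.five_mul_loglog_le]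
  · gcongr
    rw [mul_zero, zero_add, div_le_div_iff₀ hq0 hlogF]
    linarith [log_le_two_mul_of_forall_primeFactors_le hF hmax]

lemma ncard_boxNeighbors_le_of_lt_log (h : IsRegular C N r) (hc : 2 ≤ c) (hq : q ∈ F.primeFactors)
    (hqN : log N / 10 < log q) :
    ((boxNeighbors N c r F).ncard : ℝ) ≤
      C * (PellDr r N).ncard * (180 / (log (log N) * exp (log (log N) / 3))) := by
  have hN : 0 < N := one_pos.trans h.one_lt
  have hL : 0 < log (log N) := by linarith [h.eight_le_loglog]
  have hlogN := h.log_pos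
  calc ((boxNeighbors N c r F).ncard : ℝ) ≤ 18 * N / log q := by
        refine ncard_boxNeighbors_le_div_log hc hq hN.le fun p _ ↦ ?_
        convert ncard_dvd_PellDr_le_of_le (r := r) (d := p) hN.le using 4 with x
        exact Set.ext fun x ↦ and_congr_right fun hx ↦ (and_iff_left hx.2.1.le).symm
    _ ≤ 18 * N / (log N / 10) := by gcongr
    _ = N / log N * (log (log N) * exp (log (log N) / 3)) *
          (180 / (log (log N) * exp (log (log N) / 3))) := by field_simp; norm_num
    _ ≤ C * (PellDr r N).ncard * (180 / (log (log N) * exp (log (log N) / 3))) := by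
        gcongr ?_ * _
        exact h.div_log_mul_le

lemma ncard_boxNeighbors_le_of_log_le_loglog_pow (h : IsRegular C N r)
    (hc : log (log N) ^ 3 ≤ c) (hq : q ∈ F.primeFactors) (hqD : D₁ N ≤ q)
    (hqN : log q ≤ log N / 10) (hF : log F ≤ log (log N) ^ 3) :
    ((boxNeighbors N c r F).ncard : ℝ) ≤ C * (PellDr r N).ncard * (6 / log F) := by
  have hC := h.nonneg
  have hL := h.eight_le_loglog
  have hL3 : (8 : ℝ) ^ 3 ≤ log (log N) ^ 3 := by gcongr
  have hlogF : 0 < log F := log_pos (Nat.one_lt_cast.2 (Nat.nonempty_primeFactors.1 ⟨q, hq⟩))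
  have hLq : log (log N) ^ 3 ≤ q := h.loglog_pow_le_D₁.trans hqD
  refine (ncard_boxNeighbors_le_of_log_le (ε := 1 / log (log N) ^ 3) h (by linarith)
    (by positivity) (one_div_le_one_div_of_le two_pos (by linarith)) hq
    (by linarith [h.log_pos])
    (Or.inl (one_div_le_one_div_of_le (by positivity) hc))).trans ?_
  gcongr
  calc 4 * (1 / log (log N) ^ 3) + 2 / q ≤ 4 * (1 / log (log N) ^ 3) + 2 / log (log N) ^ 3 := by
        gcongr
    _ = 6 / log (log N) ^ 3 := by ring
    _ ≤ 6 / log F := by gcongr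

lemma ncard_boxNeighbors_le_of_log_le_two_mul_log (h : IsRegular C N r) (hc : 2 ≤ c)
    (hq : q ∈ F.primeFactors) (hqN : log q ≤ log N / 10) (hFq : log F ≤ 2 * log q) :
    ((boxNeighbors N c r F).ncard : ℝ) ≤ C * (PellDr r N).ncard * (36 / log F) := by
  have hC := h.nonneg
  have hlogF : 0 < log F := log_pos (Nat.one_lt_cast.2 (Nat.nonempty_primeFactors.1 ⟨q, hq⟩))
  calc ((boxNeighbors N c r F).ncard : ℝ) ≤ 18 * (C * (PellDr r N).ncard) / log q := by
        refine ncard_boxNeighbors_le_div_log hc hq (by positivity) fun p hp ↦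
          h.ncard_prime_dvd_le ((mem_primesNear (by norm_num)).1 hp).1 ?_
        linarith [h.forty_le_log, log_le_of_mem_primesNear (by norm_num) le_rfl
          (Nat.pos_of_mem_primeFactors hq).ne' hp]
    _ ≤ 18 * (C * (PellDr r N).ncard) / (log F / 2) := by gcongr; linarith
    _ = C * (PellDr r N).ncard * (36 / log F) := by ring

lemma ncard_boxNeighbors_le_of_ne (h : IsRegular C N r) (hc : 2 ≤ c) (hq : q ∈ F.primeFactors)
    (hq' : q' ∈ F.primeFactors) (hne : q' ≠ q) (hqN : log q ≤ log N / 10)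
    (hqN' : log q' ≤ log N / 10) :
    ((boxNeighbors N c r F).ncard : ℝ) ≤ C * (PellDr r N).ncard * (324 / (log q * log q')) := by
  have hC := h.nonneg
  have hprime := Nat.prime_of_mem_primeFactors hq
  have hprime' := Nat.prime_of_mem_primeFactors hq'
  have hq0 : (0 : ℝ) < q := Nat.cast_pos.2 hprime.pos
  have hq0' : (0 : ℝ) < q' := Nat.cast_pos.2 hprime'.pos
  have hε : (0 : ℝ) ≤ 1 / 2 := by norm_num
  have hcε := one_div_le_one_div_of_le two_pos hc
  calc ((boxNeighbors N c r F).ncard : ℝ)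
      ≤ #(primesNear (1 / 2) q) * #(primesNear (1 / 2) q') *
          (C * (PellDr r N).ncard / (q / 2 * (q' / 2))) := by
        refine ncard_le_card_mul_card_mul_of_exists_mul_dvd (finite_PellDr r N) (by positivity)
          (fun x hx ↦ ⟨hx.1, ?_⟩) fun p hp p' hp' hpne ↦ ?_
        · obtain ⟨g, hinj, hg⟩ := exists_injOn_mem_primesNear (by linarith : 0 < c) hε hx
          obtain ⟨hgq, hgx⟩ := hg q hq (Or.inl hcε)
          obtain ⟨hgq', hgx'⟩ := hg q' hq' (Or.inl hcε)
          have hgne : g q ≠ g q' := fun heq ↦ hne (hinj hq hq' heq).symm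
          have hcoprime : (g q).Coprime (g q') := (Nat.coprime_primes
            ((mem_primesNear hε).1 hgq).1 ((mem_primesNear hε).1 hgq').1).2 hgne
          exact ⟨g q, hgq, g q', hgq', hgne, hcoprime.mul_dvd_of_dvd_of_dvd hgx hgx'⟩
        · have hlogp := log_le_of_mem_primesNear hε le_rfl hprime.ne_zero hp
          have hlogp' := log_le_of_mem_primesNear hε le_rfl hprime'.ne_zero hp'
          refine (h.ncard_mul_dvd_le ((mem_primesNear hε).1 hp).1 ((mem_primesNear hε).1 hp').1
            hpne (by linarith [h.forty_le_log])).trans ?_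
          gcongr
          exacts [half_le_of_mem_primesNear hε le_rfl hp, half_le_of_mem_primesNear hε le_rfl hp']
    _ ≤ 9 * q / log q * (9 * q' / log q') * (C * (PellDr r N).ncard / (q / 2 * (q' / 2))) := by
        gcongr
        exacts [card_primesNear_half_le hprime.two_le, card_primesNear_half_le hprime'.two_le]
    _ = C * (PellDr r N).ncard * (324 / (log q * log q')) := by field_simp; ring

lemma ncard_boxNeighbors_le_of_D₁_le (h : IsRegular C N r) (hc : log (log N) ^ 3 ≤ c)
    (hF : Squarefree F) (hcard : #F.primeFactors ≤ log (log N)) (hq : q ∈ F.primeFactors)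
    (hmax : ∀ p ∈ F.primeFactors, p ≤ q) (hqD : D₁ N ≤ q) (hqN : log q ≤ log N / 10) :
    ((boxNeighbors N c r F).ncard : ℝ) ≤ C * (PellDr r N).ncard * (324 / log F) := by
  have hC := h.nonneg
  have hL := h.eight_le_loglog
  have hL3 : (8 : ℝ) ^ 3 ≤ log (log N) ^ 3 := by gcongr
  have hc2 : 2 ≤ c := by linarith
  have hlogF : 0 < log F := log_pos (Nat.one_lt_cast.2 (Nat.nonempty_primeFactors.1 ⟨q, hq⟩))
  rcases le_or_gt (log F) (log (log N) ^ 3) with hFL | hFL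
  · refine (ncard_boxNeighbors_le_of_log_le_loglog_pow h hc hq hqD hqN hFL).trans ?_
    gcongr
    norm_num
  rcases le_or_gt (log F) (2 * log q) with hFq | hFq
  · refine (ncard_boxNeighbors_le_of_log_le_two_mul_log h hc2 hq hqN hFq).trans ?_
    gcongr
    norm_num
  obtain ⟨q', hq', hne, hLq'⟩ := exists_primeFactor_ne_of_lt_log (by linarith) hF hcard hq hFL hFq
  have hqN' : log q' ≤ log N / 10 := (log_le_log (Nat.cast_pos.2 (Nat.pos_of_mem_primeFactors hq'))
    (Nat.cast_le.2 (hmax q' hq'))).trans hqN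
  refine (ncard_boxNeighbors_le_of_ne h hc2 hq hq' hne hqN hqN').trans ?_
  gcongr
  calc log F ≤ log (log N) * log q := log_le_mul_log_of_forall_primeFactors_le hF hcard hmax
    _ ≤ log q' * log q := by gcongr
    _ = log q * log q' := mul_comm _ _

-- Let `q` be the largest prime factor of `F`. Below `D₁` the box fixes `q`. Otherwise it confines
-- the corresponding prime factor of `x` to a window, and the saving comes from the scarcity of
-- primes there or, when `q` is tiny compared with `F`, from the shortness of the window or from
-- the one around a second large prime factor.
theorem ncard_boxNeighbors_le (h : IsRegular C N r) (hc : log (log N) ^ 3 ≤ c) (hF : Squarefree F)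
    (hF1 : 1 < F) :
    ((boxNeighbors N c r F).ncard : ℝ) ≤ 324 * (C * (PellDr r N).ncard) *
      (1 / log F + 1 / (log (log N) * exp (log (log N) / 3))) := by
  have hC := h.nonneg
  have hL := h.eight_le_loglog
  have hL3 : (8 : ℝ) ^ 3 ≤ log (log N) ^ 3 := by gcongr
  have hlogF : 0 < log F := log_pos (Nat.one_lt_cast.2 hF1)
  rcases Set.eq_empty_or_nonempty (boxNeighbors N c r F) with hempty | ⟨x, hx⟩
  · rw [hempty, Set.ncard_empty, Nat.cast_zero]
    positivity
  have hcard : #F.primeFactors ≤ log (log N) := le_trans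
    (Nat.cast_le.2 (card_primeFactors_le_of_mem_boxNeighbors (by linarith) hx)) h.le_loglog
  obtain ⟨q, hq, hmax⟩ := exists_max_image F.primeFactors id (Nat.nonempty_primeFactors.2 hF1)
  set X := log (log N) * exp (log (log N) / 3)
  suffices hbound : ∃ a b : ℝ, a ≤ 324 ∧ b ≤ 324 ∧
      ((boxNeighbors N c r F).ncard : ℝ) ≤ C * (PellDr r N).ncard * (a / log F + b / X) by
    obtain ⟨a, b, ha, hb, hle⟩ := hbound
    calc ((boxNeighbors N c r F).ncard : ℝ)
        ≤ C * (PellDr r N).ncard * (324 / log F + 324 / X) := hle.trans (by gcongr)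
      _ = 324 * (C * (PellDr r N).ncard) * (1 / log F + 1 / X) := by ring
  rcases lt_or_ge (q : ℝ) (D₁ N) with hqD | hqD
  · exact ⟨4, 0, by norm_num, by norm_num, by
      simpa using ncard_boxNeighbors_le_of_lt_D₁ h (by linarith) hF hq hmax hqD⟩
  rcases lt_or_ge (log N / 10) (log q) with hqN | hqN
  · exact ⟨0, 180, by norm_num, by norm_num, by
      simpa using ncard_boxNeighbors_le_of_lt_log h (by linarith) hq hqN⟩
  · exact ⟨324, 0, le_rfl, by norm_num, by
      simpa using ncard_boxNeighbors_le_of_D₁_le h hc hF hcard hq hmax hqD hqN⟩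

end SingleDivisor

/-! ### Union over the divisors -/

section Union

variable {C N t c : ℝ} {r : ℕ} {F : ℕ → ℕ}

lemma pow_two_pow_le_of_sq_le (ht : 0 ≤ t) (hF0 : t ≤ F 0) (hF2 : ∀ j, F j ^ 2 ≤ F (j + 1))
    (j : ℕ) : t ^ 2 ^ j ≤ F j := by
  induction j with
  | zero => simpa using hF0
  | succ j ih =>
    calc t ^ 2 ^ (j + 1) = (t ^ 2 ^ j) ^ 2 := by rw [← pow_mul, ← pow_succ]
      _ ≤ (F j : ℝ) ^ 2 := by gcongr
      _ ≤ F (j + 1) := by exact_mod_cast hF2 j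

lemma two_pow_mul_log_le_of_sq_le (ht : 0 < t) (hF0 : t ≤ F 0) (hF2 : ∀ j, F j ^ 2 ≤ F (j + 1))
    (j : ℕ) : 2 ^ j * log t ≤ log (F j) := by
  simpa using log_le_log (pow_pos ht _) (pow_two_pow_le_of_sq_le ht.le hF0 hF2 j)

lemma le_two_mul_loglog_of_sq_le (h : IsRegular C N r) (hF0 : 2 ≤ F 0)
    (hF2 : ∀ j, F j ^ 2 ≤ F (j + 1)) {j : ℕ} (hj : F j < N) : j ≤ 2 * log (log N) := by
  have hL := h.eight_le_loglog
  have hFj : (2 : ℝ) ^ 2 ^ j ≤ F j :=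
    pow_two_pow_le_of_sq_le zero_le_two (by exact_mod_cast hF0) hF2 j
  have hlog : 2 ^ j * (2 : ℝ)⁻¹ ≤ log N := calc
    2 ^ j * (2 : ℝ)⁻¹ ≤ 2 ^ j * log 2 := by gcongr; linarith [log_two_gt_d9]
    _ = log (2 ^ 2 ^ j) := by simp
    _ ≤ log N := log_le_log (by positivity) (hFj.trans hj.le)
  have hloglog : j * log 2 - log 2 ≤ log (log N) := by
    simpa [log_mul, sub_eq_add_neg] using log_le_log (by positivity) hlog
  have : (j : ℝ) * 0.69 ≤ j * log 2 := by gcongr; linarith [log_two_gt_d9]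
  linarith [log_two_lt_d9]

lemma ncard_iUnion_boxNeighbors_le_sum (h : IsRegular C N r) (hF0 : 2 ≤ F 0)
    (hF2 : ∀ j, F j ^ 2 ≤ F (j + 1)) :
    (⋃ j, boxNeighbors N c r (F j)).ncard ≤
      ∑ j ∈ range (⌊2 * log (log N)⌋₊ + 1), (boxNeighbors N c r (F j)).ncard := by
  refine (Set.ncard_le_ncard (Set.iUnion_subset fun j x hx ↦ ?_) ?_).trans
    (set_ncard_biUnion_le _ _)
  · have hj := Nat.le_floor (le_two_mul_loglog_of_sq_le h hF0 hF2 (lt_of_mem_boxNeighbors hx))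
    exact Set.mem_biUnion (mem_range.2 (Nat.lt_succ_of_le hj)) hx
  · exact (finite_toSet _).biUnion fun j _ ↦ finite_boxNeighbors N c r (F j)

lemma sum_one_div_two_pow_mul_log_add_le (ht : 1 < t) (htN : log t ^ 3 ≤ log N)
    (hL : 1 ≤ log (log N)) (hexp : exp (log (log N)) = log N) :
    ∑ j ∈ range (⌊2 * log (log N)⌋₊ + 1),
      (1 / (2 ^ j * log t) + 1 / (log (log N) * exp (log (log N) / 3))) ≤ 5 / log t := by
  have hlog : 0 < log t := log_pos ht
  have hlogt : log t ≤ exp (log (log N) / 3) := by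
    refine le_of_pow_le_pow_left₀ three_ne_zero (exp_pos _).le (htN.trans_eq ?_)
    rw [← exp_nat_mul, Nat.cast_ofNat, mul_div_cancel₀ _ three_ne_zero, hexp]
  set L := log (log N)
  have hM : ((⌊2 * L⌋₊ + 1 : ℕ) : ℝ) ≤ 3 * L := by
    push_cast
    linarith [Nat.floor_le (show 0 ≤ 2 * L by linarith)]
  have hgeom : ∑ j ∈ range (⌊2 * L⌋₊ + 1), 1 / (2 ^ j * log t) ≤ 2 * (1 / log t) := by
    simp_rw [← one_div_mul_one_div, ← one_div_pow, ← sum_mul]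
    gcongr
    exact sum_geometric_two_le _
  rw [sum_add_distrib, sum_const, card_range, nsmul_eq_mul]
  calc _ ≤ 2 * (1 / log t) + 3 * L * (1 / (L * log t)) := by gcongr
    _ = 5 / log t := by field_simp; norm_num

theorem ncard_iUnion_boxNeighbors_le (h : IsRegular C N r) (hc : log (log N) ^ 3 ≤ c) (ht : 1 < t)
    (htN : log t ^ 3 ≤ log N) (hF : ∀ j, Squarefree (F j)) (hF0 : t ≤ F 0)
    (hF2 : ∀ j, F j ^ 2 ≤ F (j + 1)) :
    ((⋃ j, boxNeighbors N c r (F j)).ncard : ℝ) ≤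
      1620 * C * (PellDr r N).ncard / log t := by
  have hC := h.nonneg
  have hlog : 0 < log t := log_pos ht
  have hL := h.eight_le_loglog
  have hgrow := two_pow_mul_log_le_of_sq_le (zero_lt_one.trans ht) hF0 hF2
  have hF1 (j : ℕ) : 1 < F j := by
    exact_mod_cast (one_lt_pow₀ ht (by positivity)).trans_le
      (pow_two_pow_le_of_sq_le (zero_lt_one.trans ht).le hF0 hF2 j)
  have hsingle (j : ℕ) : ((boxNeighbors N c r (F j)).ncard : ℝ) ≤
      324 * (C * (PellDr r N).ncard) *
        (1 / (2 ^ j * log t) + 1 / (log (log N) * exp (log (log N) / 3))) := by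
    refine (ncard_boxNeighbors_le h hc (hF j) (hF1 j)).trans ?_
    gcongr
    exact hgrow j
  calc ((⋃ j, boxNeighbors N c r (F j)).ncard : ℝ)
      ≤ ∑ j ∈ range (⌊2 * log (log N)⌋₊ + 1), ((boxNeighbors N c r (F j)).ncard : ℝ) :=
        mod_cast ncard_iUnion_boxNeighbors_le_sum h (hF1 0) hF2
    _ ≤ 324 * (C * (PellDr r N).ncard) * (5 / log t) := by
      refine (sum_le_sum fun j _ ↦ hsingle j).trans ?_
      rw [← mul_sum]
      gcongr
      exact sum_one_div_two_pow_mul_log_add_le ht htN (by linarith) h.exp_loglog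
    _ = 1620 * C * (PellDr r N).ncard / log t := by ring

end Union

lemma iUnion_dvd_box_eq_iUnion_boxNeighbors {N c : ℝ} {r : ℕ} {f : ℕ → ℤ} :
    (⋃ i ∈ {i : ℕ | 1 ≤ i}, {x ∈ PellDr r N | ∃ (k : ℕ) (B : Set ℕ), k ≤ r ∧ IsBox N c k r B ∧
      (∃ x' ∈ B, f i ∣ (x' : ℤ)) ∧ x ∈ B}) = ⋃ j, boxNeighbors N c r (f (j + 1)).natAbs := by
  simp only [boxNeighbors, ← Int.dvd_natCast, Set.mem_ofPred_eq]
  exact Set.iUnion_ge_eq_iUnion_nat_add (fun i ↦ {x ∈ PellDr r N | ∃ (k : ℕ) (B : Set ℕ),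
    k ≤ r ∧ IsBox N c k r B ∧ (∃ x' ∈ B, f i ∣ (x' : ℤ)) ∧ x ∈ B}) 1

lemma eventually_rpow_two_thirds_loglog_le :
    ∀ᶠ N in atTop, log (log N) ^ ((2 : ℝ) / 3) ≤ log (log N) / 100 := by
  filter_upwards [tendsto_log_log_atTop.eventually_ge_atTop (10 ^ 6)] with N hN
  have hroot : (100 : ℝ) ≤ log (log N) ^ ((1 : ℝ) / 3) := by
    refine le_trans (le_of_eq ?_) (rpow_le_rpow (by norm_num) hN (by norm_num))
    rw [← rpow_natCast, ← rpow_mul (by norm_num)]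
    norm_num
  have hL : 0 < log (log N) := lt_of_lt_of_le (by norm_num) hN
  rw [le_div_iff₀ (by norm_num)]
  calc log (log N) ^ ((2 : ℝ) / 3) * 100
      ≤ log (log N) ^ ((2 : ℝ) / 3) * log (log N) ^ ((1 : ℝ) / 3) := by gcongr
    _ = log (log N) := by rw [← rpow_add hL]; norm_num

lemma exists_eventually_ncard_iUnion_boxNeighbors_le :
    ∃ C : ℝ, ∀ᶠ N in atTop, ∀ (t c : ℝ) (r : ℕ), 1 < t → log t ^ 3 ≤ log N →
      log (log N) ^ 3 ≤ c → |(r : ℝ) - 1 / 2 * log (log N)| < log (log N) ^ ((2 : ℝ) / 3) →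
      ∀ F : ℕ → ℕ, (∀ j, Squarefree (F j)) → t ≤ F 0 → (∀ j, F j ^ 2 ≤ F (j + 1)) →
        ((⋃ j, boxNeighbors N c r (F j)).ncard : ℝ) ≤ C * (PellDr r N).ncard / log t := by
  obtain ⟨C, -, hreg⟩ := exists_isRegular
  refine ⟨1620 * C, ?_⟩
  filter_upwards [hreg, eventually_rpow_two_thirds_loglog_le]
    with N hN hwindow t c r ht htN hc hr F hF hF0 hF2
  exact ncard_iUnion_boxNeighbors_le (hN r (hr.le.trans hwindow)) hc ht htN hF hF0 hF2

lemma exists_ncard_iUnion_boxNeighbors_le :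
    ∃ C : ℝ, 0 < C ∧ ∀ (N t c : ℝ) (r : ℕ), 0 < N → 1 < t → log t ^ 3 ≤ log N →
      log (log N) ^ 3 ≤ c → |(r : ℝ) - 1 / 2 * log (log N)| < log (log N) ^ ((2 : ℝ) / 3) →
      ∀ F : ℕ → ℕ, (∀ j, Squarefree (F j)) → t ≤ F 0 → (∀ j, F j ^ 2 ≤ F (j + 1)) →
        ((⋃ j, boxNeighbors N c r (F j)).ncard : ℝ) ≤ C * (PellDr r N).ncard / log t := by
  obtain ⟨C, hev⟩ := exists_eventually_ncard_iUnion_boxNeighbors_le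
  obtain ⟨N₀, hlarge⟩ := eventually_atTop.1 hev
  refine ⟨max C (1 + |log N₀|), by positivity, fun N t c r hN0 ht htN hc hr F hF hF0 hF2 ↦ ?_⟩
  have hlog : 0 < log t := log_pos ht
  rcases le_or_gt N₀ N with hN | hN
  · refine (hlarge N hN t c r ht htN hc hr F hF hF0 hF2).trans ?_
    gcongr
    exact le_max_left _ _
  have hlogt : log t ≤ 1 + |log N₀| := calc
    log t ≤ 1 + log t ^ 3 := by nlinarith [sq_nonneg (log t - 1)]
    _ ≤ 1 + log N₀ := by gcongr; exact htN.trans (log_le_log hN0 hN.le)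
    _ ≤ 1 + |log N₀| := by gcongr; exact le_abs_self _
  have htrivial : (⋃ j, boxNeighbors N c r (F j)).ncard ≤ (PellDr r N).ncard :=
    Set.ncard_le_ncard (Set.iUnion_subset fun j x hx ↦ hx.1) (finite_PellDr r N)
  rw [le_div_iff₀ hlog, mul_comm]
  gcongr
  exact hlogt.trans (le_max_right _ _)

lemma one_le_log_log {N : ℝ} (hN : 10 ^ 1000 ≤ N) : 1 ≤ log (log N) := by
  have hlog : log ((10 : ℝ) ^ 1000) ≤ log N := log_le_log (by positivity) hN
  have hten : 1 ≤ log 10 := by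
    rw [le_log_iff_exp_le (by norm_num)]
    linarith [exp_one_lt_three]
  rw [log_pow, Nat.cast_ofNat] at hlog
  rw [le_log_iff_exp_le (by linarith)]
  linarith [exp_one_lt_three]

end AvoidSiegel

theorem avoid_siegel_divisors_general :
    ∃ C : ℝ, 0 < C ∧ ∀ (N t c : ℝ) (r : ℕ), Real.exp 1 ≤ N → 1 < t →
      Real.log t ^ 3 ≤ Real.log N → Real.log (Real.log N) ^ 3 ≤ c →
      |(r : ℝ) - (1 / 2) * Real.log (Real.log N)| < (Real.log (Real.log N)) ^ ((2 : ℝ) / 3) →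
      ∀ f : ℕ → ℤ,
        (∀ i, 1 ≤ i → Squarefree (f i)) → t ≤ f 1 → (∀ i, 1 ≤ i → f i ^ 2 ≤ f (i + 1)) →
        ((⋃ i ∈ {i : ℕ | 1 ≤ i}, {x ∈ PellDr r N | ∃ (k : ℕ) (B : Set ℕ), k ≤ r ∧
            IsBox N c k r B ∧ (∃ x' ∈ B, f i ∣ (x' : ℤ)) ∧ x ∈ B}).ncard : ℝ) ≤
          C * (PellDr r N).ncard / Real.log t := by
  obtain ⟨C, hC, hbound⟩ := AvoidSiegel.exists_ncard_iUnion_boxNeighbors_le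
  refine ⟨C, hC, fun N t c r hN ht htN hc hr f hsq hf1 hf2 ↦ ?_⟩
  rw [AvoidSiegel.iUnion_dvd_box_eq_iUnion_boxNeighbors]
  refine hbound N t c r ((Real.exp_pos 1).trans_le hN) ht htN hc hr _
    (fun j ↦ Int.squarefree_natAbs.2 (hsq _ j.succ_pos)) ?_ fun j ↦ ?_
  · rw [zero_add, Nat.cast_natAbs]
    exact hf1.trans (mod_cast le_abs_self _)
  · zify
    rw [sq_abs]
    exact (hf2 _ j.succ_pos).trans (le_abs_self _)

/-- Proposition 7.8 (avoiding Siegel-type divisors): if `f₁ < f₁² < f₂ < f₂² < ⋯` are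
squarefree integers `> t`, then the union of the sets `W(fᵢ)` of elements of `𝒟_r(N)`
lying in a box containing a multiple of `fᵢ` has size `O(|𝒟_r(N)|/log t)`.
All boxes carry the compression parameter `Ccompr = (log log N)^{50}`. -/
theorem avoid_siegel_divisors :
    ∃ C : ℝ, 0 < C ∧
      ∀ (N t : ℝ) (r : ℕ),
        (10 : ℝ) ^ 1000 ≤ t → t ≤ N → (Real.log t) ^ 3 ≤ Real.log N → 0 < r →
        |(r : ℝ) - (1 / 2) * Real.log (Real.log N)| < (Real.log (Real.log N)) ^ ((2 : ℝ) / 3) →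
        ∀ f : ℕ → ℤ,
          (∀ i, 1 ≤ i → Squarefree (f i) ∧ t < ((f i : ℤ) : ℝ)) →
          (∀ i, 1 ≤ i → (f i) ^ 2 < f (i + 1)) →
          ((⋃ i ∈ {i : ℕ | 1 ≤ i},
              {x ∈ PellDr r N | ∃ (k : ℕ) (B : Set ℕ), k ≤ r ∧
                IsBox N ((Real.log (Real.log N)) ^ (50 : ℕ)) k r B ∧
                (∃ x' ∈ B, (f i) ∣ (x' : ℤ)) ∧ x ∈ B}).ncard : ℝ) ≤
            C * ((PellDr r N).ncard : ℝ) / Real.log t := by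
  obtain ⟨C, hC, hbound⟩ := avoid_siegel_divisors_general
  refine ⟨C, hC, fun N t r ht htN htN3 _ hr f hf hf2 ↦ ?_⟩
  have hten : (10 : ℝ) ≤ t := (le_self_pow₀ (by norm_num) (by norm_num)).trans ht
  have hL := AvoidSiegel.one_le_log_log (ht.trans htN)
  exact hbound N t _ r (by linarith only [hten, htN, Real.exp_one_lt_three])
    (by linarith only [hten]) htN3 (pow_le_pow_right₀ hL (by norm_num)) hr f
    (fun i hi ↦ (hf i hi).1) (hf 1 le_rfl).2.le fun i hi ↦ (hf2 i hi).le
end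

section
/- Let A be a finite abelian 2-group and let s ≥ 1 be an integer. Then: (1) for every a ∈ 2^{s−1}·A[2^s] and every χ ∈ 2^{s−1}·A^∨[2^s], the value ⟨a,χ⟩_{Art_s(A)} := ψ(a), for any ψ ∈ A^∨ with 2^{s−1}·ψ = χ, is independent of the choice of ψ and lies in the 2-torsion subgroup of ℚ₂/ℤ₂ (so the pairing is F₂-valued), and ⟨·,·⟩_{Art_s(A)} is bilinear; (2) the left kernel of ⟨·,·⟩_{Art_s(A)} equals 2^s·A[2^{s+1}] and the right kernel equals 2^s·A^∨[2^{s+1}]. -/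
/-- `ℤ₂` as an additive subgroup of `ℚ₂`. -/
noncomputable def Z2sub : AddSubgroup ℚ_[2] := (PadicInt.subring 2).toAddSubgroup

/-- `N = ℚ₂/ℤ₂`. -/
abbrev QmodZ2 : Type := ℚ_[2] ⧸ Z2sub

/-- `2^{s−1}·A[2^s]` for an additive group `A`. -/
def smulTor (A : Type*) [AddCommGroup A] (s : ℕ) : Set A :=
  (fun b : A => 2 ^ (s - 1) • b) '' {b : A | 2 ^ s • b = 0}

/-- `2^s·A[2^{s+1}]`. -/
def smulTor' (A : Type*) [AddCommGroup A] (s : ℕ) : Set A :=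
  (fun b : A => 2 ^ s • b) '' {b : A | 2 ^ (s + 1) • b = 0}

/-!
Write `A^∨ = A →+ D` for a divisible group `D` with an element of order `p` for every prime
`p ∣ k`, where `k = mn`. Since `D` is injective, characters separate the points of every group
killed by `k`, and every character vanishing on `A[k]` factors through multiplication by `k`.
Hence the annihilator of `A^∨[k]` in `A` is `k•A`, and the annihilator of `A[k]` in `A^∨` is
`k•A^∨`.

If `χ = m•ψ` and `a = m•b`, then `⟨a, χ⟩ = ψ a = χ b`. The first expression shows that `a` lies
in the left kernel iff it is killed by `A^∨[k]`, the second that `χ` lies in the right kernel iff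
it kills `A[k]`. Both kernels are therefore of the form `m•B[k] ∩ k•B`, with `B` either `A` or
`A^∨`, and this intersection is `k•B[kn]` because `m•B[k]` is killed by `n`.
The Artin pairing is the case `m = 2^(s-1)`, `n = 2`, `D = ℚ₂/ℤ₂`.
-/

section Characters

variable {A B D : Type*} [AddCommGroup A] [AddCommGroup B] [AddCommGroup D] [DivisibleBy D ℤ]

theorem exists_comp_eq_of_ker_le_ker (f : A →+ B) (g : A →+ D) (hfg : f.ker ≤ g.ker) :
    ∃ h : B →+ D, h.comp f = g := by
  obtain ⟨h, hh⟩ := (Module.Baer.of_divisible D).extension_property_addMonoidHom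
    (QuotientAddGroup.kerLift f) (QuotientAddGroup.kerLift_injective f)
    (QuotientAddGroup.lift f.ker g hfg)
  exact ⟨h, AddMonoidHom.ext fun a ↦ DFunLike.congr_fun hh (a : A ⧸ f.ker)⟩

theorem exists_addMonoidHom_apply_ne_zero {k : ℕ}
    (hD : ∀ p : ℕ, p.Prime → p ∣ k → ∃ q : D, addOrderOf q = p)
    {x : A} (hx : x ≠ 0) (hkx : k • x = 0) : ∃ h : A →+ D, h x ≠ 0 := by
  have hp : (addOrderOf x).minFac.Prime :=
    Nat.minFac_prime (mt AddMonoid.addOrderOf_eq_one_iff.mp hx)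
  have hp_dvd : (addOrderOf x).minFac ∣ addOrderOf x := Nat.minFac_dvd _
  obtain ⟨q, hq⟩ := hD _ hp (hp_dvd.trans (addOrderOf_dvd_of_nsmul_eq_zero hkx))
  have hker : (zmultiplesHom A x).ker ≤ (zmultiplesHom D q).ker := fun z hz ↦ by
    rw [AddMonoidHom.mem_ker, zmultiplesHom_apply, ← addOrderOf_dvd_iff_zsmul_eq_zero] at hz ⊢
    exact (Int.natCast_dvd_natCast.mpr (hq ▸ hp_dvd)).trans hz
  obtain ⟨h, hh⟩ := exists_comp_eq_of_ker_le_ker _ _ hker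
  have hhx : h x = q := by simpa using DFunLike.congr_fun hh 1
  refine ⟨h, fun h0 ↦ hp.ne_one ?_⟩
  rw [← hq, ← hhx, h0, addOrderOf_zero]

theorem forall_torsion_character_eq_zero_iff_exists_nsmul_eq {k : ℕ}
    (hD : ∀ p : ℕ, p.Prime → p ∣ k → ∃ q : D, addOrderOf q = p) (a : A) :
    (∀ ψ : A →+ D, k • ψ = 0 → ψ a = 0) ↔ ∃ c : A, k • c = a := by
  constructor
  · intro ha
    let K : AddSubgroup A := (nsmulAddMonoidHom k).range
    have hK : ∀ x : A ⧸ K, k • x = 0 := by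
      rintro ⟨x⟩
      exact (QuotientAddGroup.eq_zero_iff _).mpr ⟨x, rfl⟩
    suffices (a : A ⧸ K) = 0 from (QuotientAddGroup.eq_zero_iff a).mp this
    by_contra ha_ne
    obtain ⟨h, hha⟩ := exists_addMonoidHom_apply_ne_zero hD ha_ne (hK a)
    refine hha (ha (h.comp (QuotientAddGroup.mk' K)) (AddMonoidHom.ext fun x ↦ ?_))
    change k • h x = 0
    rw [← map_nsmul, hK, map_zero]
  · rintro ⟨c, rfl⟩ ψ hψ
    rw [map_nsmul, ← AddMonoidHom.nsmul_apply, hψ, AddMonoidHom.zero_apply]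

theorem character_eq_zero_on_torsion_iff_exists_nsmul_eq (k : ℕ) (χ : A →+ D) :
    (∀ b : A, k • b = 0 → χ b = 0) ↔ ∃ φ : A →+ D, k • φ = χ := by
  constructor
  · intro hχ
    have hker : (nsmulAddMonoidHom (α := A) k).ker ≤ χ.ker := fun b ↦ hχ b
    obtain ⟨φ, hφ⟩ := exists_comp_eq_of_ker_le_ker _ χ hker
    refine ⟨φ, AddMonoidHom.ext fun a ↦ ?_⟩
    rw [AddMonoidHom.nsmul_apply, ← map_nsmul]
    exact DFunLike.congr_fun hφ a
  · rintro ⟨φ, rfl⟩ b hb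
    rw [AddMonoidHom.nsmul_apply, ← map_nsmul, hb, map_zero]

end Characters

section NsmulTorsion

/-- The set `m•A[k]` of `m`-th multiples of the `k`-torsion elements of `A`. The sets `smulTor A s`
and `smulTor' A s` are the cases `(m, k) = (2^(s-1), 2^s)` and `(m, k) = (2^s, 2^(s+1))`. -/
def nsmulTorsion (A : Type*) [AddCommGroup A] (m k : ℕ) : Set A :=
  (fun b : A ↦ m • b) '' {b : A | k • b = 0}

variable {A D : Type*} [AddCommGroup A] [AddCommGroup D] {m n : ℕ}

theorem nsmul_eq_zero_of_mem_nsmulTorsion {a : A} (ha : a ∈ nsmulTorsion A m (m * n)) :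
    n • a = 0 := by
  obtain ⟨b, hb, rfl⟩ := ha
  rwa [← mul_nsmul]

theorem nsmul_mem_nsmulTorsion_iff {a : A} :
    m • a ∈ nsmulTorsion A m (m * n) ↔ (m * n) • a = 0 :=
  ⟨fun h ↦ by rw [mul_nsmul, nsmul_eq_zero_of_mem_nsmulTorsion h], fun h ↦ ⟨a, h, rfl⟩⟩

theorem mem_nsmulTorsion_mul_iff {a : A} :
    a ∈ nsmulTorsion A (m * n) (m * n * n) ↔
      a ∈ nsmulTorsion A m (m * n) ∧ ∃ c : A, (m * n) • c = a := by
  constructor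
  · rintro ⟨c, hc, rfl⟩
    refine ⟨⟨n • c, ?_, (mul_nsmul' c m n).symm⟩, c, rfl⟩
    exact (mul_nsmul' c (m * n) n).symm.trans hc
  · rintro ⟨ha, c, rfl⟩
    refine ⟨c, ?_, rfl⟩
    exact (mul_nsmul c (m * n) n).trans (nsmul_eq_zero_of_mem_nsmulTorsion ha)

theorem apply_eq_apply_of_nsmul_eq_nsmul {k : ℕ} {a : A} (ha : a ∈ nsmulTorsion A m k)
    {ψ ψ' : A →+ D} (h : m • ψ = m • ψ') : ψ a = ψ' a := by
  obtain ⟨b, -, rfl⟩ := ha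
  simpa only [map_nsmul, AddMonoidHom.nsmul_apply] using DFunLike.congr_fun h b

variable [DivisibleBy D ℤ]

theorem leftKernel_eq_nsmulTorsion
    (hD : ∀ p : ℕ, p.Prime → p ∣ m * n → ∃ q : D, addOrderOf q = p) :
    {a ∈ nsmulTorsion A m (m * n) | ∀ χ ∈ nsmulTorsion (A →+ D) m (m * n), ∀ ψ : A →+ D,
      m • ψ = χ → ψ a = 0} = nsmulTorsion A (m * n) (m * n * n) := by
  ext a
  rw [mem_nsmulTorsion_mul_iff, ← forall_torsion_character_eq_zero_iff_exists_nsmul_eq hD]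
  refine and_congr_right fun _ ↦ ⟨fun h ψ hψ ↦ ?_, ?_⟩
  · exact h _ (nsmul_mem_nsmulTorsion_iff.mpr hψ) ψ rfl
  · rintro h _ hχ ψ rfl
    exact h ψ (nsmul_mem_nsmulTorsion_iff.mp hχ)

theorem rightKernel_eq_nsmulTorsion :
    {χ ∈ nsmulTorsion (A →+ D) m (m * n) | ∀ a ∈ nsmulTorsion A m (m * n), ∀ ψ : A →+ D,
      m • ψ = χ → ψ a = 0} = nsmulTorsion (A →+ D) (m * n) (m * n * n) := by
  ext χ
  rw [mem_nsmulTorsion_mul_iff, ← character_eq_zero_on_torsion_iff_exists_nsmul_eq]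
  refine and_congr_right fun hχ ↦ ⟨fun h b hb ↦ ?_, ?_⟩
  · obtain ⟨ψ, -, rfl⟩ := hχ
    simpa only [map_nsmul, AddMonoidHom.nsmul_apply] using
      h _ (nsmul_mem_nsmulTorsion_iff.mpr hb) ψ rfl
  · rintro h _ ⟨b, hb, rfl⟩ ψ rfl
    simpa only [map_nsmul, AddMonoidHom.nsmul_apply] using h b hb

end NsmulTorsion

noncomputable instance : DivisibleBy QmodZ2 ℤ :=
  QuotientAddGroup.mk_surjective.divisibleBy QuotientAddGroup.mk fun _ _ ↦ rfl

theorem QmodZ2.exists_addOrderOf_eq_two : ∃ q : QmodZ2, addOrderOf q = 2 := by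
  refine ⟨((2⁻¹ : ℚ_[2]) : QmodZ2), addOrderOf_eq_prime ?_ fun h ↦ ?_⟩
  · rw [← QuotientAddGroup.mk_nsmul, QuotientAddGroup.eq_zero_iff, nsmul_eq_mul, Nat.cast_ofNat,
      mul_inv_cancel₀ two_ne_zero]
    exact (PadicInt.subring 2).one_mem
  · have h_norm_le : ‖(2⁻¹ : ℚ_[2])‖ ≤ 1 := (QuotientAddGroup.eq_zero_iff _).mp h
    have h_norm : ‖(2⁻¹ : ℚ_[2])‖ = 2 := by
      simpa using congrArg (·⁻¹) (Padic.norm_p (p := 2))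
    rw [h_norm] at h_norm_le
    norm_num at h_norm_le

theorem QmodZ2.exists_addOrderOf_eq_of_dvd_two_pow {t p : ℕ} (hp : p.Prime) (hpt : p ∣ 2 ^ t) :
    ∃ q : QmodZ2, addOrderOf q = p :=
  (Nat.prime_dvd_prime_iff_eq hp Nat.prime_two).mp (hp.dvd_of_dvd_pow hpt) ▸
    exists_addOrderOf_eq_two

theorem artin_pairing_wellDefined_and_kernels_general
    (A D : Type*) [AddCommGroup A] [AddCommGroup D] [DivisibleBy D ℤ] (m n : ℕ)
    (hD : ∀ p : ℕ, p.Prime → p ∣ m * n → ∃ q : D, addOrderOf q = p) :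
    (∀ a ∈ nsmulTorsion A m (m * n), ∀ χ ∈ nsmulTorsion (A →+ D) m (m * n), ∀ ψ ψ' : A →+ D,
      m • ψ = χ → m • ψ' = χ → ψ a = ψ' a) ∧
    (∀ a ∈ nsmulTorsion A m (m * n), ∀ χ ∈ nsmulTorsion (A →+ D) m (m * n), ∀ ψ : A →+ D,
      m • ψ = χ → n • ψ a = 0) ∧
    (∀ a ∈ nsmulTorsion A m (m * n), ∀ a' ∈ nsmulTorsion A m (m * n),
      ∀ χ ∈ nsmulTorsion (A →+ D) m (m * n), ∀ ψ : A →+ D,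
        m • ψ = χ → ψ (a + a') = ψ a + ψ a') ∧
    (∀ a ∈ nsmulTorsion A m (m * n), ∀ χ ∈ nsmulTorsion (A →+ D) m (m * n),
      ∀ χ' ∈ nsmulTorsion (A →+ D) m (m * n), ∀ ψ ψ' : A →+ D,
        m • ψ = χ → m • ψ' = χ' → (ψ + ψ') a = ψ a + ψ' a) ∧
    ({a ∈ nsmulTorsion A m (m * n) | ∀ χ ∈ nsmulTorsion (A →+ D) m (m * n), ∀ ψ : A →+ D,
        m • ψ = χ → ψ a = 0} = nsmulTorsion A (m * n) (m * n * n)) ∧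
    ({χ ∈ nsmulTorsion (A →+ D) m (m * n) | ∀ a ∈ nsmulTorsion A m (m * n), ∀ ψ : A →+ D,
        m • ψ = χ → ψ a = 0} = nsmulTorsion (A →+ D) (m * n) (m * n * n)) := by
  refine ⟨fun a ha χ _ ψ ψ' hψ hψ' ↦ apply_eq_apply_of_nsmul_eq_nsmul ha (hψ.trans hψ'.symm),
    fun a ha χ _ ψ _ ↦ ?_, fun a _ a' _ χ _ ψ _ ↦ map_add ψ a a', fun _ _ _ _ _ _ _ _ _ _ ↦ rfl,
    leftKernel_eq_nsmulTorsion hD, rightKernel_eq_nsmulTorsion⟩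
  rw [← map_nsmul, nsmul_eq_zero_of_mem_nsmulTorsion ha, map_zero]

/-- The Artin pairing `⟨a, χ⟩ := ψ(a)` (for any `ψ ∈ A^∨` with `2^{s−1}ψ = χ`) on
`2^{s−1}A[2^s] × 2^{s−1}A^∨[2^s]` is well defined, `F₂`-valued and bilinear, and its left
and right kernels are `2^s A[2^{s+1}]` and `2^s A^∨[2^{s+1}]` respectively. -/
theorem artin_pairing_wellDefined_and_kernels
    (A : Type*) [AddCommGroup A] [Finite A] (hA : ∃ k : ℕ, Nat.card A = 2 ^ k)
    (s : ℕ) (hs : 1 ≤ s) :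
    -- (1) well-definedness: the value `ψ(a)` does not depend on the lift `ψ` of `χ`
    (∀ a ∈ smulTor A s, ∀ χ ∈ smulTor (A →+ QmodZ2) s, ∀ ψ ψ' : A →+ QmodZ2,
      2 ^ (s - 1) • ψ = χ → 2 ^ (s - 1) • ψ' = χ → ψ a = ψ' a) ∧
    -- (1) the value is `2`-torsion in `ℚ₂/ℤ₂`, i.e. the pairing is `F₂`-valued
    (∀ a ∈ smulTor A s, ∀ χ ∈ smulTor (A →+ QmodZ2) s, ∀ ψ : A →+ QmodZ2,
      2 ^ (s - 1) • ψ = χ → 2 • ψ a = 0) ∧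
    -- (1) bilinearity: additivity in the first argument
    (∀ a ∈ smulTor A s, ∀ a' ∈ smulTor A s, ∀ χ ∈ smulTor (A →+ QmodZ2) s,
      ∀ ψ : A →+ QmodZ2, 2 ^ (s - 1) • ψ = χ → ψ (a + a') = ψ a + ψ a') ∧
    -- (1) bilinearity: additivity in the second argument
    (∀ a ∈ smulTor A s, ∀ χ ∈ smulTor (A →+ QmodZ2) s, ∀ χ' ∈ smulTor (A →+ QmodZ2) s,
      ∀ ψ ψ' : A →+ QmodZ2, 2 ^ (s - 1) • ψ = χ → 2 ^ (s - 1) • ψ' = χ' →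
        (ψ + ψ') a = ψ a + ψ' a) ∧
    -- (2) the left kernel is `2^s A[2^{s+1}]`
    ({a ∈ smulTor A s | ∀ χ ∈ smulTor (A →+ QmodZ2) s, ∀ ψ : A →+ QmodZ2,
        2 ^ (s - 1) • ψ = χ → ψ a = 0} = smulTor' A s) ∧
    -- (2) the right kernel is `2^s A^∨[2^{s+1}]`
    ({χ ∈ smulTor (A →+ QmodZ2) s | ∀ a ∈ smulTor A s, ∀ ψ : A →+ QmodZ2,
        2 ^ (s - 1) • ψ = χ → ψ a = 0} = smulTor' (A →+ QmodZ2) s) := by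
  obtain ⟨t, rfl⟩ := Nat.exists_eq_add_of_le' hs
  exact artin_pairing_wellDefined_and_kernels_general A QmodZ2 (2 ^ t) 2
    fun _ hp hdvd ↦ QmodZ2.exists_addOrderOf_eq_of_dvd_two_pow hp (pow_succ 2 t ▸ hdvd)
end
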